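/- Let B be the open unit ball of ℝ⁴ and B̄ its closure. Let Λ > 0, let (ρ_k) be a sequence of reals with 0 < ρ_k ≤ Λ for all k, and let (u_k) be a sequence of solutions of the Dirichlet mean field problem on B with parameters ρ_k. Assume that sup_{x ∈ B̄} u_k(x) → +∞ as k → ∞. Then there exist a positive integer m and a strictly increasing sequence of indices (k_j) such that ρ_{k_j} → 64π²·m as j → ∞. -/

import Mathlib

open MeasureTheory Metric Filter

noncomputable section

/-- The Laplacian of `f : ℝ⁴ → ℝ` at `x`: the trace of the second derivative. -/
def lap (f : EuclideanSpace ℝ (Fin 4) → ℝ) (x : EuclideanSpace ℝ (Fin 4)) : ℝ :=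
  ∑ i : Fin 4,
    fderiv ℝ (fun y => fderiv ℝ f y (EuclideanSpace.single i (1:ℝ))) x
      (EuclideanSpace.single i (1:ℝ))

/-- `u` is a solution of the Dirichlet mean field problem on the open unit ball of `ℝ⁴`
with parameter `ρ`: `u` is `C⁴` on the closed ball, `Δ²u = ρ e^u / ∫_B e^u` in `B`, and
`u = ∂_ν u = 0` on the boundary sphere. -/
def IsMFSolution (ρ : ℝ) (u : EuclideanSpace ℝ (Fin 4) → ℝ) : Prop :=
  ContDiffOn ℝ 4 u (closedBall (0 : EuclideanSpace ℝ (Fin 4)) 1) ∧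
  (∀ x ∈ ball (0 : EuclideanSpace ℝ (Fin 4)) 1,
    lap (lap u) x
      = ρ * Real.exp (u x) /
          ∫ y in ball (0 : EuclideanSpace ℝ (Fin 4)) 1, Real.exp (u y)) ∧
  (∀ x : EuclideanSpace ℝ (Fin 4), ‖x‖ = 1 →
    u x = 0 ∧ fderivWithin ℝ u (closedBall (0 : EuclideanSpace ℝ (Fin 4)) 1) x = 0)

/-!
Boggio's Green function of `Δ²` with Dirichlet data on the ball is explicit and positive, so a
solution satisfies an integral equation to which the method of moving planes applies: it is radial
and radially decreasing. Write `w` for its profile, `l = ρ / ∫ e^u`, and `M`, `Y` for the integrals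
of `r³ l e^w` and `r⁵ l e^w` over `[0, 1]`, so that `ρ = 2π² M`. The radial Pohozaev identity reads
`(M - Y)² + 8 l = 32 M`. If `w 0 → ∞`, the logarithmic singularity of the kernel forces the mass
to concentrate at the origin, hence `l → 0` and `Y → 0` while `M` stays away from `0`. Therefore
`M → 32` and `ρ → 64 π²`: only one bubble can form, and no subsequence is needed.
-/

local notation "ℝ⁴" => EuclideanSpace ℝ (Fin 4)
local notation "𝔹" => ball (0 : ℝ⁴) 1
local notation "𝔻" => closedBall (0 : ℝ⁴) 1
local notation "𝐞" => fun i : Fin 4 => EuclideanSpace.single i (1 : ℝ)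

section CompactConvex

variable {E : Type*} [NormedAddCommGroup E] [NormedSpace ℝ E] {K : Set E} {F : E → ℝ}

lemma exists_lipschitzOnWith_of_contDiffOn (hKc : IsCompact K) (hK : Convex ℝ K)
    (hKi : (interior K).Nonempty) (hF : ContDiffOn ℝ 1 F K) : ∃ C, LipschitzOnWith C F K := by
  have hcont : ContinuousOn (fun x => ‖fderivWithin ℝ F K x‖₊) K :=
    (hF.continuousOn_fderivWithin (uniqueDiffOn_convex hK hKi) le_rfl).nnnorm
  obtain ⟨C, hC⟩ := (hKc.image_of_continuousOn hcont).bddAbove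
  exact ⟨C, hK.lipschitzOnWith_of_nnnorm_fderivWithin_le (hF.differentiableOn one_ne_zero)
    fun x hx => hC ⟨x, hx, rfl⟩⟩

lemma lipschitzWith_indicator_of_eq_zero_on_frontier [Nontrivial E] {C : NNReal}
    (hKc : IsCompact K) (hF : LipschitzOnWith C F K) (h0 : ∀ x ∈ frontier K, F x = 0) :
    LipschitzWith C (K.indicator F) := by
  have cross {x y : E} (hx : x ∈ K) (hy : y ∉ K) : dist (F x) 0 ≤ C * dist x y := by
    obtain ⟨z, hz, hxz⟩ := hKc.exists_mem_frontier_infDist_compl_eq_dist hx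
    calc dist (F x) 0 = dist (F x) (F z) := by rw [h0 z hz]
      _ ≤ C * dist x z := hF.dist_le_mul x hx z (hKc.isClosed.frontier_subset hz)
      _ ≤ C * dist x y := by rw [← hxz]; gcongr; exact infDist_le_dist_of_mem hy
  refine LipschitzWith.of_dist_le_mul fun x y => ?_
  by_cases hx : x ∈ K <;> by_cases hy : y ∈ K
  · simpa only [Set.indicator_of_mem, hx, hy] using hF.dist_le_mul x hx y hy
  · simpa only [Set.indicator_of_mem hx, Set.indicator_of_notMem hy] using cross hx hy
  · simpa only [Set.indicator_of_mem hy, Set.indicator_of_notMem hx, dist_comm] using cross hy hx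
  · rw [Set.indicator_of_notMem hx, Set.indicator_of_notMem hy, dist_self]
    positivity

lemma exists_lipschitzWith_indicator_of_contDiffOn [Nontrivial E] (hKc : IsCompact K)
    (hK : Convex ℝ K) (hKi : (interior K).Nonempty) (hF : ContDiffOn ℝ 1 F K)
    (h0 : ∀ x ∈ frontier K, F x = 0) : ∃ C, LipschitzWith C (K.indicator F) :=
  (exists_lipschitzOnWith_of_contDiffOn hKc hK hKi hF).imp fun _ hC =>
    lipschitzWith_indicator_of_eq_zero_on_frontier hKc hC h0

-- By Rademacher's integration by parts: the extension of `F` by zero is Lipschitz.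
theorem integral_interior_fderiv_eq_zero [FiniteDimensional ℝ E] [Nontrivial E]
    [MeasurableSpace E] [BorelSpace E] (μ : Measure E) [μ.IsAddHaarMeasure] (hKc : IsCompact K)
    (hK : Convex ℝ K) (hKi : (interior K).Nonempty) (hF : ContDiffOn ℝ 1 F K)
    (h0 : ∀ x ∈ frontier K, F x = 0) (v : E) :
    ∫ x in interior K, fderiv ℝ F x v ∂μ = 0 := by
  obtain ⟨C, hC⟩ := exists_lipschitzWith_indicator_of_contDiffOn hKc hK hKi hF h0
  have hsupp : HasCompactSupport (K.indicator F) :=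
    HasCompactSupport.intro hKc fun x hx => Set.indicator_of_notMem hx _
  have hparts : ∫ x, lineDeriv ℝ (K.indicator F) x v ∂μ = 0 := by
    have h := LipschitzWith.integral_lineDeriv_mul_eq (μ := μ) (LipschitzWith.const (1 : ℝ)) hC
      hsupp (-v)
    simpa [lineDeriv] using h.symm
  rw [← integral_indicator isOpen_interior.measurableSet, ← hparts]
  refine integral_congr_ae ?_
  filter_upwards [measure_eq_zero_iff_ae_notMem.1 (hK.addHaar_frontier μ)] with x hx
  by_cases hxK : x ∈ interior K
  · have hxn : K ∈ nhds x := mem_interior_iff_mem_nhds.1 hxK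
    have heq : K.indicator F =ᶠ[nhds x] F := by
      filter_upwards [hxn] with y hy using Set.indicator_of_mem hy _
    have hd : DifferentiableAt ℝ F x := (hF.differentiableOn one_ne_zero).differentiableAt hxn
    rw [Set.indicator_of_mem hxK, heq.lineDeriv_eq, hd.lineDeriv_eq_fderiv]
  · have hxc : x ∉ K := fun h => hx ⟨subset_closure h, hxK⟩
    have heq : K.indicator F =ᶠ[nhds x] fun _ => 0 := by
      filter_upwards [hKc.isClosed.isOpen_compl.mem_nhds hxc] with y hy
        using Set.indicator_of_notMem hy _
    rw [Set.indicator_of_notMem hxK, heq.lineDeriv_eq]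
    simp [lineDeriv]

end CompactConvex

section Laplacian

variable {f g : ℝ⁴ → ℝ} {K : Set ℝ⁴} {x : ℝ⁴} {n m : WithTop ℕ∞}

lemma lap_congr (h : f =ᶠ[nhds x] g) : lap f x = lap g x :=
  Finset.sum_congr rfl fun i _ => by
    have hi : (fun y => fderiv ℝ f y (𝐞 i)) =ᶠ[nhds x] fun y => fderiv ℝ g y (𝐞 i) :=
      h.fderiv.fun_comp fun T => T (𝐞 i)
    rw [hi.fderiv_eq]

/-- The `i`-th partial derivative of `f` within `K`; it makes sense up to the boundary of `K`. -/
def partialWithin (K : Set ℝ⁴) (i : Fin 4) (f : ℝ⁴ → ℝ) (x : ℝ⁴) : ℝ :=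
  fderivWithin ℝ f K x (𝐞 i)

/-- The Laplacian of `f` within `K`, an extension of `lap f` up to the boundary of `K`. -/
def lapWithin (K : Set ℝ⁴) (f : ℝ⁴ → ℝ) (x : ℝ⁴) : ℝ :=
  ∑ i, partialWithin K i (partialWithin K i f) x

lemma contDiffOn_partialWithin (hK : UniqueDiffOn ℝ K) (hf : ContDiffOn ℝ n f K) (hmn : m + 1 ≤ n)
    (i : Fin 4) : ContDiffOn ℝ m (partialWithin K i f) K :=
  (hf.fderivWithin hK hmn).clm_apply contDiffOn_const

lemma contDiffOn_lapWithin (hK : UniqueDiffOn ℝ K) (hf : ContDiffOn ℝ n f K) (hmn : m + 2 ≤ n) :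
    ContDiffOn ℝ m (lapWithin K f) K :=
  ContDiffOn.sum fun i _ => contDiffOn_partialWithin hK
    (contDiffOn_partialWithin hK hf (by rwa [add_assoc, one_add_one_eq_two]) i) le_rfl i

lemma partialWithin_of_mem_interior (i : Fin 4) (hx : x ∈ interior K) :
    partialWithin K i f x = fderiv ℝ f x (𝐞 i) := by
  rw [partialWithin, fderivWithin_of_mem_nhds (mem_interior_iff_mem_nhds.1 hx)]

lemma lapWithin_of_mem_interior (hx : x ∈ interior K) : lapWithin K f x = lap f x :=
  Finset.sum_congr rfl fun i _ => by
    have hi : partialWithin K i f =ᶠ[nhds x] fun y => fderiv ℝ f y (𝐞 i) := by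
      filter_upwards [isOpen_interior.mem_nhds hx] with y hy
        using partialWithin_of_mem_interior i hy
    rw [partialWithin_of_mem_interior i hx, hi.fderiv_eq]

lemma lap_lapWithin_of_mem_interior (hx : x ∈ interior K) :
    lap (lapWithin K f) x = lap (lap f) x :=
  lap_congr <| by
    filter_upwards [isOpen_interior.mem_nhds hx] with y hy using lapWithin_of_mem_interior hy

/-- `g` satisfies the Dirichlet conditions `g = 0` and `Dg = 0` on the boundary of `K`. -/
def HasZeroDirichletData (K : Set ℝ⁴) (g : ℝ⁴ → ℝ) : Prop :=
  ∀ x ∈ frontier K, g x = 0 ∧ fderivWithin ℝ g K x = 0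

lemma integrableOn_interior (hKc : IsCompact K) (hf : ContinuousOn f K) :
    IntegrableOn f (interior K) :=
  (hf.integrableOn_compact hKc).mono_set interior_subset

lemma mul_lap_sub_mul_lap (hx : x ∈ interior K) (hK : UniqueDiffOn ℝ K)
    (hf : ContDiffOn ℝ 2 f K) (hg : ContDiffOn ℝ 2 g K) :
    g x * lap f x - f x * lap g x =
      ∑ i, fderiv ℝ (fun y => g y * partialWithin K i f y - f y * partialWithin K i g y) x
        (𝐞 i) := by
  rw [← lapWithin_of_mem_interior hx, ← lapWithin_of_mem_interior hx]
  simp only [lapWithin, Finset.mul_sum, ← Finset.sum_sub_distrib]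
  refine Finset.sum_congr rfl fun i _ => ?_
  have hxn : K ∈ nhds x := mem_interior_iff_mem_nhds.1 hx
  have diffAt {w : ℝ⁴ → ℝ} (hw : ContDiffOn ℝ 1 w K) : DifferentiableAt ℝ w x :=
    (hw.differentiableOn one_ne_zero).differentiableAt hxn
  have df := diffAt (hf.of_le one_le_two)
  have dg := diffAt (hg.of_le one_le_two)
  have dpf := diffAt (contDiffOn_partialWithin hK hf one_add_one_eq_two.le i)
  have dpg := diffAt (contDiffOn_partialWithin hK hg one_add_one_eq_two.le i)
  rw [fderiv_fun_sub (dg.fun_mul dpf) (df.fun_mul dpg), fderiv_fun_mul dg dpf,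
    fderiv_fun_mul df dpg]
  simp only [_root_.sub_apply, _root_.add_apply, _root_.smul_apply, smul_eq_mul,
    partialWithin_of_mem_interior i hx]
  ring

theorem integral_mul_lap_comm (hKc : IsCompact K) (hK : Convex ℝ K)
    (hKi : (interior K).Nonempty) (hf : ContDiffOn ℝ 2 f K) (hg : ContDiffOn ℝ 2 g K)
    (hg0 : HasZeroDirichletData K g) :
    ∫ x in interior K, g x * lap f x = ∫ x in interior K, f x * lap g x := by
  have hKd : UniqueDiffOn ℝ K := uniqueDiffOn_convex hK hKi
  have integrable {v w : ℝ⁴ → ℝ} (hv : ContinuousOn v K) (hw : ContDiffOn ℝ 2 w K) :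
      IntegrableOn (fun x => v x * lap w x) (interior K) :=
    (integrableOn_interior hKc (hv.mul
      (contDiffOn_lapWithin (m := 0) hKd hw (zero_add _).le).continuousOn)).congr_fun
      (fun x hx => congrArg (v x * ·) (lapWithin_of_mem_interior hx))
      isOpen_interior.measurableSet
  rw [← sub_eq_zero, ← integral_sub (integrable hg.continuousOn hf)
    (integrable hf.continuousOn hg)]
  let F (i : Fin 4) (x : ℝ⁴) : ℝ := g x * partialWithin K i f x - f x * partialWithin K i g x
  have hF (i : Fin 4) : ContDiffOn ℝ 1 (F i) K :=
    ((hg.of_le one_le_two).mul (contDiffOn_partialWithin hKd hf one_add_one_eq_two.le i)).sub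
      ((hf.of_le one_le_two).mul (contDiffOn_partialWithin hKd hg one_add_one_eq_two.le i))
  have hF0 (i : Fin 4) (x : ℝ⁴) (hx : x ∈ frontier K) : F i x = 0 := by
    simp [F, partialWithin, hg0 x hx]
  rw [setIntegral_congr_fun isOpen_interior.measurableSet
    fun x hx => mul_lap_sub_mul_lap hx hKd hf hg, integral_finsetSum]
  · exact Finset.sum_eq_zero fun i _ =>
      integral_interior_fderiv_eq_zero volume hKc hK hKi (hF i) (hF0 i) _
  · intro i _
    exact (integrableOn_interior hKc
      (contDiffOn_partialWithin (m := 0) hKd (hF i) (zero_add _).le i).continuousOn).congr_fun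
      (fun x hx => partialWithin_of_mem_interior i hx) isOpen_interior.measurableSet

theorem integral_mul_lap_lap_comm (hKc : IsCompact K) (hK : Convex ℝ K)
    (hKi : (interior K).Nonempty) (hf : ContDiffOn ℝ 4 f K) (hg : ContDiffOn ℝ 4 g K)
    (hf0 : HasZeroDirichletData K f) (hg0 : HasZeroDirichletData K g) :
    ∫ x in interior K, g x * lap (lap f) x = ∫ x in interior K, f x * lap (lap g) x := by
  have hKd : UniqueDiffOn ℝ K := uniqueDiffOn_convex hK hKi
  have htwo : (2 : WithTop ℕ∞) + 2 ≤ 4 := by norm_num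
  have integral_eq (v w : ℝ⁴ → ℝ) :
      ∫ x in interior K, v x * lap (lap w) x = ∫ x in interior K, v x * lap (lapWithin K w) x :=
    setIntegral_congr_fun isOpen_interior.measurableSet fun x hx => by
      rw [lap_lapWithin_of_mem_interior hx]
  have swap (v w : ℝ⁴ → ℝ) :
      ∫ x in interior K, lapWithin K v x * lap w x
        = ∫ x in interior K, lapWithin K w x * lap v x :=
    setIntegral_congr_fun isOpen_interior.measurableSet fun x hx => by
      rw [lapWithin_of_mem_interior hx, lapWithin_of_mem_interior hx, mul_comm]
  have hf2 := contDiffOn_lapWithin hKd hf htwo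
  have hg2 := contDiffOn_lapWithin hKd hg htwo
  have h24 : (2 : WithTop ℕ∞) ≤ 4 := by norm_num
  rw [integral_eq, integral_eq,
    integral_mul_lap_comm hKc hK hKi hf2 (hg.of_le h24) hg0, swap,
    ← integral_mul_lap_comm hKc hK hKi hg2 (hf.of_le h24) hf0]

end Laplacian

section AlmansiForm

variable {a c : ℝ} {x y : ℝ⁴} {ψ χ ψ' χ' ψ'' χ'' : ℝ → ℝ}

/-- The quadratic polynomial `a‖y‖² - 2⟪x, y⟫ + c` in `y`. Both `‖x - y‖²` and the denominator of
the Boggio kernel are of this form, with `‖x‖² = ac`. -/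
def quad (a : ℝ) (x : ℝ⁴) (c : ℝ) (y : ℝ⁴) : ℝ :=
  a * ‖y‖ ^ 2 - 2 * inner ℝ x y + c

lemma hasFDerivAt_quad (a : ℝ) (x : ℝ⁴) (c : ℝ) (y : ℝ⁴) :
    HasFDerivAt (quad a x c) ((2 * a) • innerSL ℝ y - (2 : ℝ) • innerSL ℝ x) y := by
  have h := (((hasStrictFDerivAt_norm_sq y).hasFDerivAt.const_mul a).sub
    ((innerSL ℝ x).hasFDerivAt.const_mul 2)).add_const c
  refine h.congr_fderiv ?_
  ext v
  simp only [sub_apply, smul_apply, coe_innerSL_apply, nsmul_eq_mul, Nat.cast_ofNat, smul_eq_mul,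
    sub_left_inj]
  ring

lemma continuous_quad : Continuous (quad a x c) := by
  unfold quad
  fun_prop

lemma contDiff_quad {n : WithTop ℕ∞} : ContDiff ℝ n (quad a x c) :=
  ((contDiff_const.mul (contDiff_norm_sq ℝ)).sub
    (contDiff_const.mul (contDiff_const.inner ℝ contDiff_id))).add contDiff_const

/-- A function of `y` in Almansi form `(1 - ‖y‖²) ψ(Q) + χ(Q)`, where `Q = quad a x c y`. -/
def almansi (a : ℝ) (x : ℝ⁴) (c : ℝ) (ψ χ : ℝ → ℝ) (y : ℝ⁴) : ℝ :=
  (1 - ‖y‖ ^ 2) * ψ (quad a x c y) + χ (quad a x c y)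

lemma hasFDerivAt_almansi {d e : ℝ} (hψ : HasDerivAt ψ d (quad a x c y))
    (hχ : HasDerivAt χ e (quad a x c y)) :
    HasFDerivAt (almansi a x c ψ χ)
      (((1 - ‖y‖ ^ 2) * d + e) • ((2 * a) • innerSL ℝ y - (2 : ℝ) • innerSL ℝ x)
        - (2 * ψ (quad a x c y)) • innerSL ℝ y) y := by
  have hQ := hasFDerivAt_quad a x c y
  have hq := (hasStrictFDerivAt_norm_sq y).hasFDerivAt.const_sub 1
  refine ((hq.mul (hψ.comp_hasFDerivAt y hQ)).add (hχ.comp_hasFDerivAt y hQ)).congr_fderiv ?_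
  ext v
  simp only [Function.comp_apply, smul_neg, add_apply, smul_apply, sub_apply, coe_innerSL_apply,
    smul_eq_mul, neg_apply, nsmul_eq_mul, Nat.cast_ofNat]
  ring

lemma fderiv_almansi_apply (hψ : HasDerivAt ψ (ψ' (quad a x c y)) (quad a x c y))
    (hχ : HasDerivAt χ (χ' (quad a x c y)) (quad a x c y)) (i : Fin 4) :
    fderiv ℝ (almansi a x c ψ χ) y (𝐞 i) =
      almansi a x c ψ' χ' y * (2 * a * y i - 2 * x i) - 2 * y i * ψ (quad a x c y) := by
  rw [(hasFDerivAt_almansi hψ hχ).fderiv]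
  simp only [sub_apply, smul_apply, coe_innerSL_apply, EuclideanSpace.inner_single_right,
    Real.ringHom_apply, one_mul, smul_eq_mul, almansi, sub_right_inj]
  ring

lemma fderiv_fderiv_almansi_apply
    (hψ : ∀ᶠ s in nhds (quad a x c y), HasDerivAt ψ (ψ' s) s)
    (hχ : ∀ᶠ s in nhds (quad a x c y), HasDerivAt χ (χ' s) s)
    (hψ' : HasDerivAt ψ' (ψ'' (quad a x c y)) (quad a x c y))
    (hχ' : HasDerivAt χ' (χ'' (quad a x c y)) (quad a x c y))
    (i : Fin 4) :
    fderiv ℝ (fun z => fderiv ℝ (almansi a x c ψ χ) z (𝐞 i)) y (𝐞 i) =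
      almansi a x c ψ'' χ'' y * (2 * a * y i - 2 * x i) ^ 2
        + 2 * a * almansi a x c ψ' χ' y - 2 * ψ (quad a x c y)
        - 4 * y i * (2 * a * y i - 2 * x i) * ψ' (quad a x c y) := by
  have hfirst : (fun z => fderiv ℝ (almansi a x c ψ χ) z (𝐞 i)) =ᶠ[nhds y] fun z =>
      almansi a x c ψ' χ' z * (2 * a * z i - 2 * x i) - 2 * z i * ψ (quad a x c z) := by
    filter_upwards [continuous_quad.continuousAt.eventually hψ,
      continuous_quad.continuousAt.eventually hχ] with z hzψ hzχ
      using fderiv_almansi_apply hzψ hzχ i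
  have hcoord : HasFDerivAt (fun z : ℝ⁴ => z i) (EuclideanSpace.proj i : ℝ⁴ →L[ℝ] ℝ) y :=
    (EuclideanSpace.proj i : ℝ⁴ →L[ℝ] ℝ).hasFDerivAt
  have hψQ : HasFDerivAt (fun z => ψ (quad a x c z)) _ y :=
    hψ.self_of_nhds.comp_hasFDerivAt y (hasFDerivAt_quad a x c y)
  have h := ((hasFDerivAt_almansi hψ' hχ').fun_mul
    ((hcoord.const_mul (2 * a)).sub_const (2 * x i))).fun_sub ((hcoord.const_mul 2).fun_mul hψQ)
  rw [hfirst.fderiv_eq, h.fderiv]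
  simp only [almansi, sub_apply, add_apply, smul_apply, PiLp.proj_apply, PiLp.single_eq_same,
    smul_eq_mul, mul_one, coe_innerSL_apply, EuclideanSpace.inner_single_right,
    Real.ringHom_apply, one_mul]
  ring

lemma lap_almansi (hx : ‖x‖ ^ 2 = a * c)
    (hψ : ∀ᶠ s in nhds (quad a x c y), HasDerivAt ψ (ψ' s) s)
    (hχ : ∀ᶠ s in nhds (quad a x c y), HasDerivAt χ (χ' s) s)
    (hψ' : HasDerivAt ψ' (ψ'' (quad a x c y)) (quad a x c y))
    (hχ' : HasDerivAt χ' (χ'' (quad a x c y)) (quad a x c y)) :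
    lap (almansi a x c ψ χ) y =
      almansi a x c (fun s => 4 * a * (s * ψ'' s + 3 * ψ' s))
        (fun s => 4 * a * (s * χ'' s + 2 * χ' s) - 8 * ψ s + 4 * (c - a - s) * ψ' s) y := by
  have hgrad : ∑ i, (2 * a * y i - 2 * x i) ^ 2 = 4 * a * quad a x c y := by
    have h : ∑ i, (2 * a * y i - 2 * x i) ^ 2 = ‖(2 * a) • y - (2 : ℝ) • x‖ ^ 2 := by
      simp [EuclideanSpace.real_norm_sq_eq]
    rw [h, norm_sub_sq_real, norm_smul, norm_smul, mul_pow, mul_pow, hx, inner_smul_left,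
      inner_smul_right, real_inner_comm, Real.norm_eq_abs, sq_abs]
    simp only [Real.ringHom_apply, Real.norm_ofNat, quad]
    ring
  have hrad : ∑ i, y i * (2 * a * y i - 2 * x i) = quad a x c y + a * ‖y‖ ^ 2 - c := by
    have h : ∑ i, y i * (2 * a * y i - 2 * x i) = inner ℝ ((2 * a) • y - (2 : ℝ) • x) y := by
      simp [PiLp.inner_apply]
    rw [h, inner_sub_left, inner_smul_left, inner_smul_left, real_inner_self_eq_norm_sq]
    simp only [Real.ringHom_apply, quad]
    ring
  have hlap : lap (almansi a x c ψ χ) y =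
      almansi a x c ψ'' χ'' y * ∑ i, (2 * a * y i - 2 * x i) ^ 2
        + 8 * a * almansi a x c ψ' χ' y - 8 * ψ (quad a x c y)
        - 4 * ψ' (quad a x c y) * ∑ i, y i * (2 * a * y i - 2 * x i) := by
    simp only [lap, fderiv_fderiv_almansi_apply hψ hχ hψ' hχ', Fin.sum_univ_four]
    ring
  rw [hlap, hgrad, hrad]
  simp only [almansi]
  ring

lemma hasDerivAt_inv_add_pow (n : ℕ) {ε s : ℝ} (hs : s + ε ≠ 0) :
    HasDerivAt (fun r => ((r + ε) ^ n)⁻¹) (-n * ((s + ε) ^ (n + 1))⁻¹) s := by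
  have h := (hasDerivAt_zpow (-n) (s + ε) (Or.inl hs)).comp_add_const s ε
  simpa [zpow_sub_one₀ hs, pow_succ, mul_comm, mul_assoc] using h

lemma hasDerivAt_inv_add {ε s : ℝ} (hs : s + ε ≠ 0) :
    HasDerivAt (fun r => (r + ε)⁻¹) (-((s + ε) ^ 2)⁻¹) s := by
  simpa using hasDerivAt_inv_add_pow 1 hs

lemma hasDerivAt_log_add {ε s : ℝ} (hs : s + ε ≠ 0) :
    HasDerivAt (fun r => Real.log (r + ε)) (s + ε)⁻¹ s := by
  simpa using ((hasDerivAt_id s).add_const ε).log hs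

/-- The regularised logarithmic kernel `log (Q + ε) - (1 - a) (1 - ‖y‖²) / (Q + ε)`, where
`Q = quad a x c y`. The regularised Boggio kernel is the difference of its instances
`(a, c) = (‖x‖², 1)` and `(a, c) = (1, ‖x‖²)`. -/
def logKernel (ε a : ℝ) (x : ℝ⁴) (c : ℝ) : ℝ⁴ → ℝ :=
  almansi a x c (fun s => -(1 - a) * (s + ε)⁻¹) (fun s => Real.log (s + ε))

lemma lap_logKernel {ε : ℝ} (hx : ‖x‖ ^ 2 = a * c) (hac : (1 - a) * (1 - c) = 0)
    (hy : quad a x c y + ε ≠ 0) :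
    lap (logKernel ε a x c) y =
      almansi a x c
        (fun s => 4 * a * (1 - a) * (((s + ε) ^ 2)⁻¹ + 2 * ε * ((s + ε) ^ 3)⁻¹))
        (fun s => 4 * (s + ε)⁻¹ + 4 * ((1 - a) ^ 2 + ε) * ((s + ε) ^ 2)⁻¹) y := by
  have hne : ∀ᶠ s in nhds (quad a x c y), s + ε ≠ 0 :=
    (continuous_id.add continuous_const).continuousAt.eventually_ne hy
  rw [logKernel, lap_almansi
    (ψ' := fun s => -(1 - a) * -((s + ε) ^ 2)⁻¹) (χ' := fun s => (s + ε)⁻¹)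
    (ψ'' := fun s => -(1 - a) * -(-2 * ((s + ε) ^ 3)⁻¹)) (χ'' := fun s => -((s + ε) ^ 2)⁻¹) hx
    (hne.mono fun s hs => (hasDerivAt_inv_add hs).const_mul _)
    (hne.mono fun s hs => hasDerivAt_log_add hs)
    ((hasDerivAt_inv_add_pow 2 hy).neg.const_mul _) (hasDerivAt_inv_add hy)]
  simp only [almansi]
  generalize quad a x c y = Q at hy
  obtain ⟨S, rfl⟩ : ∃ S, Q = S - ε := ⟨Q + ε, by ring⟩
  rw [sub_add_cancel] at *
  field_simp
  linear_combination (-4 * S) * hac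

lemma lap_lap_logKernel {ε : ℝ} (hx : ‖x‖ ^ 2 = a * c) (hac : (1 - a) * (1 - c) = 0)
    (hy : quad a x c y + ε ≠ 0) :
    lap (lap (logKernel ε a x c)) y =
      -96 * a * ε * almansi a x c (fun s => 4 * a * (1 - a) * ε * ((s + ε) ^ 5)⁻¹)
        (fun s => (2 * (1 - a) ^ 2 + ε + (1 - a) * ε) * ((s + ε) ^ 4)⁻¹) y := by
  have hne : ∀ᶠ s in nhds (quad a x c y), s + ε ≠ 0 :=
    (continuous_id.add continuous_const).continuousAt.eventually_ne hy
  have hlap : lap (logKernel ε a x c) =ᶠ[nhds y] almansi a x c _ _ :=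
    (continuous_quad.continuousAt.eventually hne).mono fun z hz => lap_logKernel hx hac hz
  have hψ {s : ℝ} (hs : s + ε ≠ 0) := ((hasDerivAt_inv_add_pow 2 hs).fun_add
    ((hasDerivAt_inv_add_pow 3 hs).const_mul (2 * ε))).const_mul (4 * a * (1 - a))
  have hχ {s : ℝ} (hs : s + ε ≠ 0) := ((hasDerivAt_inv_add hs).const_mul 4).fun_add
    ((hasDerivAt_inv_add_pow 2 hs).const_mul (4 * ((1 - a) ^ 2 + ε)))
  have hψ' := (((hasDerivAt_inv_add_pow 3 hy).const_mul (-(2 : ℕ) : ℝ)).fun_add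
    (((hasDerivAt_inv_add_pow 4 hy).const_mul (-(3 : ℕ) : ℝ)).const_mul (2 * ε))).const_mul
    (4 * a * (1 - a))
  have hχ' := ((hasDerivAt_inv_add_pow 2 hy).fun_neg.const_mul 4).fun_add
    (((hasDerivAt_inv_add_pow 3 hy).const_mul (-(2 : ℕ) : ℝ)).const_mul (4 * ((1 - a) ^ 2 + ε)))
  rw [lap_congr hlap, lap_almansi (ψ'' := fun _ => _) (χ'' := fun _ => _) hx
    (hne.mono fun s hs => hψ hs) (hne.mono fun s hs => hχ hs) hψ' hχ']
  simp only [almansi]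
  generalize quad a x c y = Q at hy
  obtain ⟨S, rfl⟩ : ∃ S, Q = S - ε := ⟨Q + ε, by ring⟩
  rw [sub_add_cancel] at *
  push_cast
  linear_combination (norm := skip) (32 * a * (S + 3 * ε) / S ^ 4) * hac
  field_simp
  ring

end AlmansiForm

section BoggioKernel

/-- Boggio's profile `log (1 + s) - s / (1 + s)`, i.e. the integral of `σ / (1 + σ)²` over
`[0, s]`. -/
def boggioProfile (s : ℝ) : ℝ :=
  Real.log (1 + s) - s / (1 + s)

@[simp]
lemma boggioProfile_zero : boggioProfile 0 = 0 := by
  simp [boggioProfile]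

lemma hasDerivAt_boggioProfile {s : ℝ} (hs : -1 < s) :
    HasDerivAt boggioProfile (s / (1 + s) ^ 2) s := by
  have hne : 1 + s ≠ 0 := by linarith
  have h1 := (hasDerivAt_id s).const_add 1
  refine ((h1.log hne).sub ((hasDerivAt_id s).div h1 hne)).congr_deriv ?_
  simp only [id]
  field_simp
  ring

lemma continuousAt_boggioProfile {s : ℝ} (hs : -1 < s) : ContinuousAt boggioProfile s :=
  (hasDerivAt_boggioProfile hs).continuousAt

lemma strictMonoOn_boggioProfile : StrictMonoOn boggioProfile (Set.Ici 0) := by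
  refine strictMonoOn_of_deriv_pos (convex_Ici 0)
    (fun s hs => (continuousAt_boggioProfile ?_).continuousWithinAt) fun s hs => ?_
  · linarith [Set.mem_Ici.1 hs]
  · rw [interior_Ici, Set.mem_Ioi] at hs
    rw [(hasDerivAt_boggioProfile (by linarith)).deriv]
    positivity

lemma boggioProfile_nonneg {s : ℝ} (hs : 0 ≤ s) : 0 ≤ boggioProfile s := by
  simpa using strictMonoOn_boggioProfile.monotoneOn Set.self_mem_Ici hs hs

lemma boggioProfile_le_log {s : ℝ} (hs : 0 ≤ s) : boggioProfile s ≤ Real.log (1 + s) :=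
  sub_le_self _ (by positivity)

lemma boggioProfile_le_self {s : ℝ} (hs : 0 ≤ s) : boggioProfile s ≤ s := by
  linarith [boggioProfile_le_log hs, Real.log_le_sub_one_of_pos (show 0 < 1 + s by linarith)]

variable {E : Type*} [SeminormedAddCommGroup E] {x y : E} {ε : ℝ}

/-- The Boggio kernel of the unit ball with its singularity regularised by `ε`. -/
def regBoggio (ε : ℝ) (x y : E) : ℝ :=
  boggioProfile ((1 - ‖x‖ ^ 2) * (1 - ‖y‖ ^ 2) / (‖x - y‖ ^ 2 + ε))

/-- The Boggio kernel. In dimension four it is `16π²` times the Green function of `Δ²` on the unit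
ball with Dirichlet boundary conditions; see `green_representation`. -/
def boggioKernel (x y : E) : ℝ :=
  boggioProfile ((1 - ‖x‖ ^ 2) * (1 - ‖y‖ ^ 2) / ‖x - y‖ ^ 2)

lemma one_sub_norm_sq_nonneg (hx : ‖x‖ ≤ 1) : 0 ≤ 1 - ‖x‖ ^ 2 :=
  sub_nonneg.2 (pow_le_one₀ (norm_nonneg x) hx)

lemma one_sub_norm_sq_pos (hx : x ∈ ball (0 : E) 1) : 0 < 1 - ‖x‖ ^ 2 :=
  sub_pos.2 ((sq_lt_one_iff₀ (norm_nonneg x)).2 (mem_ball_zero_iff.1 hx))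

lemma regBoggio_zero (x y : E) : regBoggio 0 x y = boggioKernel x y := by
  rw [regBoggio, boggioKernel, add_zero]

lemma regBoggio_nonneg (hx : ‖x‖ ≤ 1) (hy : ‖y‖ ≤ 1) (hε : 0 ≤ ε) : 0 ≤ regBoggio ε x y :=
  have := one_sub_norm_sq_nonneg hx
  have := one_sub_norm_sq_nonneg hy
  boggioProfile_nonneg (by positivity)

lemma regBoggio_le_inv (hx : ‖x‖ ≤ 1) (hy : ‖y‖ ≤ 1) (hε : 0 ≤ ε) :
    regBoggio ε x y ≤ (‖x - y‖ ^ 2 + ε)⁻¹ := by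
  have hp := one_sub_norm_sq_nonneg hx
  have hq := one_sub_norm_sq_nonneg hy
  refine (boggioProfile_le_self (by positivity)).trans ?_
  rw [div_eq_mul_inv]
  refine mul_le_of_le_one_left (by positivity) (mul_le_one₀ ?_ hq ?_) <;>
    exact sub_le_self _ (by positivity)

lemma boggioKernel_nonneg (hx : ‖x‖ ≤ 1) (hy : ‖y‖ ≤ 1) : 0 ≤ boggioKernel x y :=
  regBoggio_zero x y ▸ regBoggio_nonneg hx hy le_rfl

lemma boggioKernel_le_inv (hx : ‖x‖ ≤ 1) (hy : ‖y‖ ≤ 1) :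
    boggioKernel x y ≤ (‖x - y‖ ^ 2)⁻¹ := by
  simpa only [regBoggio_zero, add_zero] using regBoggio_le_inv hx hy le_rfl

lemma tendsto_regBoggio (hx : ‖x‖ ≤ 1) (hy : ‖y‖ ≤ 1) (hxy : ‖x - y‖ ≠ 0) :
    Tendsto (fun ε => regBoggio ε x y) (nhds 0) (nhds (boggioKernel x y)) := by
  have hp := one_sub_norm_sq_nonneg hx
  have hq := one_sub_norm_sq_nonneg hy
  rw [← regBoggio_zero]
  refine (continuousAt_boggioProfile (lt_of_lt_of_le neg_one_lt_zero (by positivity))).tendsto.comp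
    (ContinuousAt.tendsto ?_)
  exact continuousAt_const.div (by fun_prop) (by simpa using hxy)

end BoggioKernel

section RegularizedGreen

variable {x y : ℝ⁴} {ε : ℝ}

lemma contDiff_boggio_argument {n : WithTop ℕ∞} (x : ℝ⁴) (hε : 0 < ε) :
    ContDiff ℝ n fun y => (1 - ‖x‖ ^ 2) * (1 - ‖y‖ ^ 2) / (‖x - y‖ ^ 2 + ε) :=
  (contDiff_const.mul (contDiff_const.sub (contDiff_norm_sq ℝ))).div
    (((contDiff_norm_sq ℝ).comp (contDiff_const.sub contDiff_id)).add contDiff_const)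
    fun _ => by positivity

lemma contDiffOn_regBoggio {n : WithTop ℕ∞} (hx : x ∈ 𝔻) (hε : 0 < ε) :
    ContDiffOn ℝ n (regBoggio ε x) 𝔻 := by
  intro y hy
  rw [mem_closedBall_zero_iff] at hx hy
  have hp := one_sub_norm_sq_nonneg hx
  have hq := one_sub_norm_sq_nonneg hy
  have hne : 1 + (1 - ‖x‖ ^ 2) * (1 - ‖y‖ ^ 2) / (‖x - y‖ ^ 2 + ε) ≠ 0 := by positivity
  have hs := (contDiff_boggio_argument x hε).contDiffAt (n := n) (x := y)
  have hs1 := contDiffAt_const (c := (1 : ℝ)).add hs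
  exact ((hs1.log hne).sub (hs.div hs1 hne)).contDiffWithinAt

lemma uniqueDiffOn_closedBall_zero_one : UniqueDiffOn ℝ 𝔻 :=
  uniqueDiffOn_convex (convex_closedBall 0 1) (by simp [interior_closedBall])

lemma hasZeroDirichletData_regBoggio (hε : 0 < ε) : HasZeroDirichletData 𝔻 (regBoggio ε x) := by
  intro y hy
  rw [frontier_closedBall _ one_ne_zero, mem_sphere_zero_iff_norm] at hy
  have hs0 : (1 - ‖x‖ ^ 2) * (1 - ‖y‖ ^ 2) / (‖x - y‖ ^ 2 + ε) = 0 := by simp [hy]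
  have hprofile : HasDerivAt boggioProfile 0
      ((1 - ‖x‖ ^ 2) * (1 - ‖y‖ ^ 2) / (‖x - y‖ ^ 2 + ε)) := by
    simpa [hs0] using hasDerivAt_boggioProfile neg_one_lt_zero
  have h := hprofile.comp_hasFDerivAt y
    ((contDiff_boggio_argument (n := 1) x hε).differentiable one_ne_zero y).hasFDerivAt
  rw [zero_smul] at h
  refine ⟨by simp [regBoggio, hs0], h.hasFDerivWithinAt.fderivWithin ?_⟩
  exact uniqueDiffOn_closedBall_zero_one y (by simp [hy])

lemma quad_one_norm_sq (x y : ℝ⁴) : quad 1 x (‖x‖ ^ 2) y = ‖x - y‖ ^ 2 := by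
  rw [quad, norm_sub_sq_real]
  ring

lemma quad_norm_sq_one (x y : ℝ⁴) :
    quad (‖x‖ ^ 2) x 1 y = ‖x - y‖ ^ 2 + (1 - ‖x‖ ^ 2) * (1 - ‖y‖ ^ 2) := by
  rw [quad, norm_sub_sq_real]
  ring

lemma one_sub_norm_sq_le_quad (hx : x ∈ 𝔻) (hy : y ∈ 𝔻) :
    (1 - ‖x‖) ^ 2 ≤ quad (‖x‖ ^ 2) x 1 y := by
  rw [mem_closedBall_zero_iff] at hx hy
  have h : ‖x‖ * ‖y‖ ≤ ‖x‖ := mul_le_of_le_one_right (norm_nonneg x) hy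
  calc (1 - ‖x‖) ^ 2 ≤ (1 - ‖x‖ * ‖y‖) ^ 2 := by gcongr
    _ = ‖x‖ ^ 2 * ‖y‖ ^ 2 - 2 * (‖x‖ * ‖y‖) + 1 := by ring
    _ ≤ quad (‖x‖ ^ 2) x 1 y := by
      rw [quad]
      gcongr
      exact real_inner_le_norm x y

lemma regBoggio_eventuallyEq_logKernel_sub (hx : x ∈ 𝔻) (hy : y ∈ 𝔻) (hε : 0 < ε) :
    regBoggio ε x =ᶠ[nhds y]
      fun z => logKernel ε (‖x‖ ^ 2) x 1 z - logKernel ε 1 x (‖x‖ ^ 2) z := by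
  have hpos : 0 < quad (‖x‖ ^ 2) x 1 y + ε :=
    add_pos_of_nonneg_of_pos ((sq_nonneg _).trans (one_sub_norm_sq_le_quad hx hy)) hε
  filter_upwards [(continuous_quad.add continuous_const).continuousAt.eventually_const_lt hpos]
    with z hD
  change 0 < quad (‖x‖ ^ 2) x 1 z + ε at hD
  have ht : 0 < ‖x - z‖ ^ 2 + ε := by positivity
  have hs : 1 + (1 - ‖x‖ ^ 2) * (1 - ‖z‖ ^ 2) / (‖x - z‖ ^ 2 + ε) =
      (quad (‖x‖ ^ 2) x 1 z + ε) / (‖x - z‖ ^ 2 + ε) := by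
    rw [quad_norm_sq_one]
    field_simp
    ring
  rw [regBoggio, boggioProfile, hs, Real.log_div hD.ne' ht.ne']
  simp only [logKernel, almansi, quad_one_norm_sq]
  field_simp
  ring

lemma contDiffAt_logKernel {n : WithTop ℕ∞} {a c : ℝ} (hy : quad a x c y + ε ≠ 0) :
    ContDiffAt ℝ n (logKernel ε a x c) y := by
  have hQ : ContDiffAt ℝ n (fun z => quad a x c z + ε) y :=
    contDiff_quad.contDiffAt.add contDiffAt_const
  exact ((contDiffAt_const.sub (contDiff_norm_sq ℝ).contDiffAt).mul
    (contDiffAt_const.mul (hQ.inv hy))).add (hQ.log hy)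

lemma contDiffAt_fderiv_apply {f : ℝ⁴ → ℝ} {m n : WithTop ℕ∞} (hf : ContDiffAt ℝ n f y)
    (hmn : m + 1 ≤ n) (v : ℝ⁴) : ContDiffAt ℝ m (fun z => fderiv ℝ f z v) y :=
  (hf.fderiv_right hmn).clm_apply contDiffAt_const

lemma contDiffAt_lap {f : ℝ⁴ → ℝ} {m : WithTop ℕ∞} (hf : ContDiffAt ℝ (m + 1 + 1) f y) :
    ContDiffAt ℝ m (lap f) y :=
  ContDiffAt.sum fun i _ =>
    contDiffAt_fderiv_apply (contDiffAt_fderiv_apply hf le_rfl (𝐞 i)) le_rfl (𝐞 i)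

lemma lap_sub {f g : ℝ⁴ → ℝ} (hf : ContDiffAt ℝ 2 f y) (hg : ContDiffAt ℝ 2 g y) :
    lap (fun z => f z - g z) y = lap f y - lap g y := by
  rw [lap, lap, lap, ← Finset.sum_sub_distrib]
  refine Finset.sum_congr rfl fun i _ => ?_
  have hfirst : (fun z => fderiv ℝ (fun w => f w - g w) z (𝐞 i)) =ᶠ[nhds y]
      fun z => fderiv ℝ f z (𝐞 i) - fderiv ℝ g z (𝐞 i) := by
    filter_upwards [hf.eventually (by simp), hg.eventually (by simp)] with z hfz hgz
    rw [fderiv_fun_sub (hfz.differentiableAt two_ne_zero) (hgz.differentiableAt two_ne_zero)]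
    rfl
  have hdiff {h : ℝ⁴ → ℝ} (hh : ContDiffAt ℝ 2 h y) :
      DifferentiableAt ℝ (fun z => fderiv ℝ h z (𝐞 i)) y :=
    (contDiffAt_fderiv_apply hh one_add_one_eq_two.le _).differentiableAt one_ne_zero
  rw [hfirst.fderiv_eq, fderiv_fun_sub (hdiff hf) (hdiff hg)]
  rfl

lemma lap_lap_sub {f g : ℝ⁴ → ℝ} (hf : ContDiffAt ℝ 4 f y) (hg : ContDiffAt ℝ 4 g y) :
    lap (lap fun z => f z - g z) y = lap (lap f) y - lap (lap g) y := by
  have h24 : (2 : WithTop ℕ∞) ≤ 4 := by norm_num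
  have h : lap (fun z => f z - g z) =ᶠ[nhds y] fun z => lap f z - lap g z := by
    filter_upwards [hf.eventually (by simp), hg.eventually (by simp)] with z hfz hgz
      using lap_sub (hfz.of_le h24) (hgz.of_le h24)
  have h4 : (4 : WithTop ℕ∞) = 2 + 1 + 1 := by norm_num
  rw [lap_congr h, lap_sub (contDiffAt_lap (h4 ▸ hf)) (contDiffAt_lap (h4 ▸ hg))]

lemma lap_lap_regBoggio (hx : x ∈ 𝔻) (hy : y ∈ 𝔻) (hε : 0 < ε) :
    lap (lap (regBoggio ε x)) y = 96 * ε ^ 2 * ((‖x - y‖ ^ 2 + ε) ^ 4)⁻¹ -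
      96 * ‖x‖ ^ 2 * ε *
        ((1 - ‖y‖ ^ 2) *
            (4 * ‖x‖ ^ 2 * (1 - ‖x‖ ^ 2) * ε * ((quad (‖x‖ ^ 2) x 1 y + ε) ^ 5)⁻¹)
          + (2 * (1 - ‖x‖ ^ 2) ^ 2 + ε + (1 - ‖x‖ ^ 2) * ε)
            * ((quad (‖x‖ ^ 2) x 1 y + ε) ^ 4)⁻¹) := by
  have hD : quad (‖x‖ ^ 2) x 1 y + ε ≠ 0 :=
    (add_pos_of_nonneg_of_pos ((sq_nonneg _).trans (one_sub_norm_sq_le_quad hx hy)) hε).ne'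
  have ht : quad 1 x (‖x‖ ^ 2) y + ε ≠ 0 := by
    rw [quad_one_norm_sq]
    positivity
  have hlap : lap (regBoggio ε x) =ᶠ[nhds y] lap _ :=
    (regBoggio_eventuallyEq_logKernel_sub hx hy hε).eventuallyEq_nhds.mono fun z hz => lap_congr hz
  rw [lap_congr hlap, lap_lap_sub (contDiffAt_logKernel hD) (contDiffAt_logKernel ht),
    lap_lap_logKernel (by ring) (by ring) hD, lap_lap_logKernel (by ring) (by ring) ht]
  simp only [almansi, quad_one_norm_sq]
  ring

lemma abs_lap_lap_regBoggio_sub_le (hx : x ∈ 𝔹) (hy : y ∈ 𝔻) (hε : 0 < ε) (hε1 : ε ≤ 1) :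
    |lap (lap (regBoggio ε x)) y - 96 * ε ^ 2 * ((‖x - y‖ ^ 2 + ε) ^ 4)⁻¹| ≤
      768 * ((1 - ‖x‖) ^ 10)⁻¹ * ε := by
  rw [lap_lap_regBoggio (ball_subset_closedBall hx) hy hε, sub_sub_cancel_left, abs_neg]
  have hquad := one_sub_norm_sq_le_quad (ball_subset_closedBall hx) hy
  rw [mem_ball_zero_iff] at hx
  rw [mem_closedBall_zero_iff] at hy
  have hδ : 0 < 1 - ‖x‖ := sub_pos.2 hx
  have ha : 0 ≤ 1 - ‖x‖ ^ 2 := one_sub_norm_sq_nonneg hx.le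
  have hq : 0 ≤ 1 - ‖y‖ ^ 2 := one_sub_norm_sq_nonneg hy
  set δ := 1 - ‖x‖
  set S := quad (‖x‖ ^ 2) x 1 y + ε
  set a := ‖x‖ ^ 2
  have hS : δ ^ 2 ≤ S := by linarith
  have hS0 : 0 < S := (by positivity : 0 < δ ^ 2).trans_le hS
  have ha0 : 0 ≤ a := sq_nonneg ‖x‖
  have ha1 : a ≤ 1 := sub_nonneg.1 ha
  have hS5 : (S ^ 5)⁻¹ ≤ (δ ^ 10)⁻¹ := by
    rw [show δ ^ 10 = (δ ^ 2) ^ 5 by ring]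
    gcongr
  have hS4 : (S ^ 4)⁻¹ ≤ (δ ^ 10)⁻¹ := by
    have hδ8 : δ ^ 10 ≤ (δ ^ 2) ^ 4 := by
      rw [← pow_mul]
      exact pow_le_pow_of_le_one hδ.le (sub_le_self _ (norm_nonneg x)) (by norm_num)
    gcongr
    exact hδ8.trans (by gcongr)
  have hψ : (1 - ‖y‖ ^ 2) * (4 * a * (1 - a) * ε * (S ^ 5)⁻¹) ≤ 4 * (δ ^ 10)⁻¹ :=
    calc _ ≤ 1 * (4 * 1 * 1 * 1 * (δ ^ 10)⁻¹) := by
          gcongr <;> first | assumption | exact sub_le_self _ (by positivity)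
      _ = 4 * (δ ^ 10)⁻¹ := by ring
  have hχ : (2 * (1 - a) ^ 2 + ε + (1 - a) * ε) * (S ^ 4)⁻¹ ≤ 4 * (δ ^ 10)⁻¹ := by
    gcongr
    nlinarith
  rw [abs_of_nonneg (by positivity)]
  calc 96 * a * ε * _ ≤ 96 * 1 * ε * (4 * (δ ^ 10)⁻¹ + 4 * (δ ^ 10)⁻¹) := by gcongr
    _ = 768 * (δ ^ 10)⁻¹ * ε := by ring

end RegularizedGreen

section GreenRepresentation

variable {x y : ℝ⁴}

lemma integral_radial (f : ℝ → ℝ) :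
    ∫ x : ℝ⁴, f ‖x‖ = 2 * Real.pi ^ 2 * ∫ r in Set.Ioi (0 : ℝ), r ^ 3 * f r := by
  have hvol : volume.real 𝔹 = Real.pi ^ 2 / 2 := by
    rw [Measure.real, InnerProductSpace.volume_ball_of_dim_even (k := 2) (by simp)]
    have hπ : 0 ≤ Real.pi ^ 2 / 2 := by positivity
    simpa using hπ
  rw [integral_fun_norm_addHaar volume f, hvol]
  simp only [finrank_euclideanSpace_fin, nsmul_eq_mul, smul_eq_mul]
  push_cast
  ring

lemma integral_Ioi_pow_three_mul_bubble :
    ∫ r in Set.Ioi (0 : ℝ), r ^ 3 * ((r ^ 2 + 1) ^ 4)⁻¹ = 1 / 12 := by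
  let F (r : ℝ) : ℝ := -(1 / 4) * ((r ^ 2 + 1) ^ 2)⁻¹ + 1 / 6 * ((r ^ 2 + 1) ^ 3)⁻¹
  have hF (r : ℝ) : HasDerivAt F (r ^ 3 * ((r ^ 2 + 1) ^ 4)⁻¹) r := by
    have hne : r ^ 2 + 1 ≠ 0 := by positivity
    have hr : HasDerivAt (fun r : ℝ => r ^ 2) (2 * r) r := by simpa using hasDerivAt_pow 2 r
    have hinv (n : ℕ) : HasDerivAt (fun r : ℝ => ((r ^ 2 + 1) ^ n)⁻¹)
        (-n * ((r ^ 2 + 1) ^ (n + 1))⁻¹ * (2 * r)) r := by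
      simpa only [Function.comp_def] using
        HasDerivAt.comp (h := fun r : ℝ => r ^ 2) r (hasDerivAt_inv_add_pow n hne) hr
    refine (((hinv 2).const_mul (-(1 / 4))).add ((hinv 3).const_mul (1 / 6))).congr_deriv ?_
    push_cast
    field_simp
    ring
  have hlim : Tendsto F atTop (nhds 0) := by
    have hpow (n : ℕ) (hn : n ≠ 0) :
        Tendsto (fun r : ℝ => ((r ^ 2 + 1) ^ n)⁻¹) atTop (nhds 0) :=
      ((tendsto_pow_atTop hn).comp
        (tendsto_atTop_add_const_right _ 1 (tendsto_pow_atTop two_ne_zero))).inv_tendsto_atTop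
    simpa [F] using ((hpow 2 two_ne_zero).const_mul (-(1 / 4) : ℝ)).add
      ((hpow 3 three_ne_zero).const_mul (1 / 6 : ℝ))
  rw [integral_Ioi_of_hasDerivAt_of_nonneg' (fun r _ => hF r) (fun r hr => ?_) hlim]
  · norm_num [F]
  · have : (0 : ℝ) < r := hr
    positivity

/-- The probability density `6 / (π² (1 + ‖z‖²)⁴)` on `ℝ⁴`, whose rescalings form the approximate
identity hidden in the bilaplacian of the regularised Boggio kernel. -/
def bubble (z : ℝ⁴) : ℝ :=
  6 / Real.pi ^ 2 * ((‖z‖ ^ 2 + 1) ^ 4)⁻¹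

lemma integral_bubble : ∫ z, bubble z = 1 := by
  simp only [bubble]
  rw [integral_const_mul, integral_radial fun r => ((r ^ 2 + 1) ^ 4)⁻¹,
    integral_Ioi_pow_three_mul_bubble]
  field_simp
  norm_num

lemma tendsto_norm_pow_mul_bubble :
    Tendsto (fun z => ‖z‖ ^ Module.finrank ℝ ℝ⁴ * bubble z) (Bornology.cobounded ℝ⁴) (nhds 0) := by
  have h4 : Tendsto (fun z : ℝ⁴ => (‖z‖ ^ 4)⁻¹) (Bornology.cobounded ℝ⁴) (nhds 0) :=
    ((tendsto_pow_atTop four_ne_zero).comp tendsto_norm_cobounded_atTop).inv_tendsto_atTop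
  have hbound := h4.const_mul (6 / Real.pi ^ 2)
  rw [mul_zero] at hbound
  refine squeeze_zero (fun z => by unfold bubble; positivity) (fun z => ?_) hbound
  rw [bubble, mul_left_comm, finrank_euclideanSpace_fin]
  gcongr
  rcases eq_or_ne z 0 with rfl | hz
  · simp
  replace hz : 0 < ‖z‖ := norm_pos_iff.2 hz
  rw [← div_eq_mul_inv, ← one_div, div_le_div_iff₀ (by positivity) (by positivity),
    one_mul, ← pow_add, show 4 + 4 = 2 * 4 by norm_num, pow_mul]
  gcongr
  exact le_add_of_nonneg_right zero_le_one

lemma tendsto_inv_sqrt_nhdsGT_zero :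
    Tendsto (fun ε : ℝ => (√ε)⁻¹) (nhdsWithin 0 (Set.Ioi 0)) atTop := by
  refine tendsto_inv_nhdsGT_zero.comp (tendsto_nhdsWithin_iff.2 ⟨?_, ?_⟩)
  · simpa using (Real.continuous_sqrt.tendsto 0).mono_left nhdsWithin_le_nhds
  · filter_upwards [self_mem_nhdsWithin] with ε hε using Real.sqrt_pos.2 hε

lemma tendsto_integral_bubble_mul {g : ℝ⁴ → ℝ} (hg : Integrable g) (hgx : ContinuousAt g x) :
    Tendsto (fun ε : ℝ => ∫ y, 96 * ε ^ 2 * ((‖x - y‖ ^ 2 + ε) ^ 4)⁻¹ * g y)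
      (nhdsWithin 0 (Set.Ioi 0)) (nhds (16 * Real.pi ^ 2 * g x)) := by
  have h := (tendsto_integral_comp_smul_smul_of_integrable' (μ := volume)
    (fun z => by unfold bubble; positivity) integral_bubble tendsto_norm_pow_mul_bubble hg
    hgx).comp tendsto_inv_sqrt_nhdsGT_zero
  refine (h.const_mul (16 * Real.pi ^ 2)).congr' ?_
  filter_upwards [self_mem_nhdsWithin] with ε hε
  rw [Function.comp_apply, ← integral_const_mul]
  congr 1 with y
  obtain ⟨c, hc, rfl⟩ : ∃ c : ℝ, 0 < c ∧ ε = c ^ 2 :=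
    ⟨√ε, Real.sqrt_pos.2 hε, (Real.sq_sqrt (le_of_lt hε)).symm⟩
  rw [Real.sqrt_sq hc.le, bubble, norm_smul, Real.norm_of_nonneg (inv_nonneg.2 hc.le),
    finrank_euclideanSpace_fin, smul_eq_mul]
  have : ‖x - y‖ ^ 2 + c ^ 2 ≠ 0 := by positivity
  field_simp
  ring

lemma integrable_indicator_inv_norm_sq (R : ℝ) :
    Integrable ((ball (0 : ℝ⁴) R).indicator fun z => (‖z‖ ^ 2)⁻¹) := by
  rw [integrable_indicator_iff measurableSet_ball,
    integrableOn_fun_norm_addHaar volume (f := fun r => (r ^ 2)⁻¹)]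
  refine ((continuous_id.integrableOn_Icc (a := (0 : ℝ)) (b := R)).mono_set
    Set.Ioo_subset_Icc_self).congr_fun (fun r hr => ?_) measurableSet_Ioo
  have : r ≠ 0 := hr.1.ne'
  simp only [id, finrank_euclideanSpace_fin, smul_eq_mul]
  field_simp

lemma indicator_inv_norm_sq_sub {y : ℝ⁴} (hx : x ∈ 𝔹) (hy : y ∈ 𝔹) :
    (ball (0 : ℝ⁴) 2).indicator (fun z => (‖z‖ ^ 2)⁻¹) (x - y) = (‖x - y‖ ^ 2)⁻¹ := by
  refine Set.indicator_of_mem ?_ _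
  rw [mem_ball_zero_iff] at hx hy ⊢
  linarith [norm_sub_le x y]

lemma integrableOn_inv_norm_sub_sq (hx : x ∈ 𝔹) :
    IntegrableOn (fun y => (‖x - y‖ ^ 2)⁻¹) 𝔹 :=
  ((integrable_indicator_inv_norm_sq 2).comp_sub_left x).integrableOn.congr_fun
    (fun _ hy => indicator_inv_norm_sq_sub hx hy) measurableSet_ball

lemma ae_mem_ball_and_norm_sub_ne_zero (x : ℝ⁴) :
    ∀ᵐ y ∂volume.restrict 𝔹, y ∈ 𝔹 ∧ ‖x - y‖ ≠ 0 := by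
  filter_upwards [ae_restrict_mem measurableSet_ball,
    ae_restrict_of_ae (Measure.ae_ne volume x)] with y hy hne
    using ⟨hy, norm_ne_zero_iff.2 (sub_ne_zero.2 hne.symm)⟩

lemma tendsto_integral_regBoggio_mul {f : ℝ⁴ → ℝ} (hx : x ∈ 𝔹) (hf : ContinuousOn f 𝔻) :
    Tendsto (fun ε => ∫ y in 𝔹, regBoggio ε x y * f y) (nhdsWithin 0 (Set.Ioi 0))
      (nhds (∫ y in 𝔹, boggioKernel x y * f y)) := by
  obtain ⟨C, hC⟩ := (isCompact_closedBall (0 : ℝ⁴) 1).exists_bound_of_continuousOn hf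
  have hxD := mem_closedBall_zero_iff.1 (ball_subset_closedBall hx)
  have hbd {y : ℝ⁴} (hy : y ∈ 𝔹) := mem_closedBall_zero_iff.1 (ball_subset_closedBall hy)
  refine tendsto_integral_filter_of_dominated_convergence (fun y => (‖x - y‖ ^ 2)⁻¹ * C) ?_ ?_
    ((integrableOn_inv_norm_sub_sq hx).mul_const C) ?_
  · filter_upwards [self_mem_nhdsWithin] with ε hε
    exact (((contDiffOn_regBoggio (n := 0) (ball_subset_closedBall hx) hε).continuousOn.mul
      hf).mono ball_subset_closedBall).aestronglyMeasurable measurableSet_ball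
  · filter_upwards [self_mem_nhdsWithin] with ε hε
    filter_upwards [ae_mem_ball_and_norm_sub_ne_zero x] with y ⟨hy, hne⟩
    have hε : 0 < ε := hε
    have hle : (‖x - y‖ ^ 2 + ε)⁻¹ ≤ (‖x - y‖ ^ 2)⁻¹ := by
      gcongr
      exact le_add_of_nonneg_right hε.le
    rw [norm_mul, Real.norm_of_nonneg (regBoggio_nonneg hxD (hbd hy) hε.le)]
    exact mul_le_mul ((regBoggio_le_inv hxD (hbd hy) hε.le).trans hle)
      (hC y (ball_subset_closedBall hy)) (norm_nonneg _) (by positivity)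
  · filter_upwards [ae_mem_ball_and_norm_sub_ne_zero x] with y ⟨hy, hne⟩
    exact ((tendsto_regBoggio hxD (hbd hy) hne).mono_left nhdsWithin_le_nhds).mul_const _

lemma exists_continuousOn_eqOn_lap_lap {u : ℝ⁴ → ℝ} (hu : ContDiffOn ℝ 4 u 𝔻) :
    ∃ F : ℝ⁴ → ℝ, ContinuousOn F 𝔻 ∧ Set.EqOn (lap (lap u)) F 𝔹 := by
  have hint : interior 𝔻 = 𝔹 := interior_closedBall 0 one_ne_zero
  have huniq := uniqueDiffOn_closedBall_zero_one
  refine ⟨lapWithin 𝔻 (lapWithin 𝔻 u), (contDiffOn_lapWithin (m := 0) huniq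
    (contDiffOn_lapWithin (m := 2) huniq hu (by norm_num)) (by norm_num)).continuousOn,
    fun y hy => ?_⟩
  rw [← hint] at hy
  rw [lapWithin_of_mem_interior hy, lap_lapWithin_of_mem_interior hy]

lemma integrableOn_mul_lap_lap {f u : ℝ⁴ → ℝ} (hf : ContinuousOn f 𝔻)
    (hu : ContDiffOn ℝ 4 u 𝔻) : IntegrableOn (fun y => f y * lap (lap u) y) 𝔹 := by
  obtain ⟨F, hF, hFu⟩ := exists_continuousOn_eqOn_lap_lap hu
  have h := integrableOn_interior (isCompact_closedBall 0 1) (hf.mul hF)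
  rw [interior_closedBall 0 one_ne_zero] at h
  exact h.congr_fun (fun y hy => congrArg (f y * ·) (hFu hy).symm) measurableSet_ball

lemma tendsto_setIntegral_bubble_mul {f : ℝ⁴ → ℝ} (hx : x ∈ 𝔹) (hf : ContinuousOn f 𝔻) :
    Tendsto (fun ε : ℝ => ∫ y in 𝔹, f y * (96 * ε ^ 2 * ((‖x - y‖ ^ 2 + ε) ^ 4)⁻¹))
      (nhdsWithin 0 (Set.Ioi 0)) (nhds (16 * Real.pi ^ 2 * f x)) := by
  have hfB : IntegrableOn f 𝔹 := by
    simpa only [interior_closedBall (0 : ℝ⁴) one_ne_zero]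
      using integrableOn_interior (isCompact_closedBall 0 1) hf
  have hind : (𝔹).indicator f =ᶠ[nhds x] f :=
    Set.eqOn_indicator.eventuallyEq_of_mem (isOpen_ball.mem_nhds hx)
  have h := tendsto_integral_bubble_mul ((integrable_indicator_iff measurableSet_ball).2 hfB)
    ((hf.continuousAt (closedBall_mem_nhds_of_mem hx)).congr hind.symm)
  rw [Set.indicator_of_mem hx] at h
  refine h.congr fun ε => ?_
  rw [← integral_indicator measurableSet_ball]
  congr 1 with y
  rw [Set.indicator_mul_left, mul_comm]

lemma tendsto_integral_mul_lap_lap_regBoggio_sub {f : ℝ⁴ → ℝ} (hx : x ∈ 𝔹)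
    (hf : ContinuousOn f 𝔻) :
    Tendsto (fun ε => ∫ y in 𝔹, f y *
        (lap (lap (regBoggio ε x)) y - 96 * ε ^ 2 * ((‖x - y‖ ^ 2 + ε) ^ 4)⁻¹))
      (nhdsWithin 0 (Set.Ioi 0)) (nhds 0) := by
  obtain ⟨M, hM⟩ := (isCompact_closedBall (0 : ℝ⁴) 1).exists_bound_of_continuousOn hf
  let C := M * (768 * ((1 - ‖x‖) ^ 10)⁻¹)
  have hbound : Tendsto (fun ε => C * ε * volume.real 𝔹) (nhdsWithin 0 (Set.Ioi 0)) (nhds 0) :=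
    tendsto_nhdsWithin_of_tendsto_nhds <| by
      simpa using (((continuous_id.tendsto 0).const_mul C).mul_const (volume.real 𝔹))
  refine squeeze_zero_norm' ?_ hbound
  filter_upwards [Ioc_mem_nhdsGT one_pos] with ε hε
  refine norm_setIntegral_le_of_norm_le_const measure_ball_lt_top fun y hy => ?_
  have hyD := ball_subset_closedBall hy
  rw [norm_mul, mul_assoc M]
  exact mul_le_mul (hM y hyD) (abs_lap_lap_regBoggio_sub_le hx hyD hε.1 hε.2) (norm_nonneg _)
    ((norm_nonneg _).trans (hM y hyD))

lemma tendsto_integral_mul_lap_lap_regBoggio {f : ℝ⁴ → ℝ} (hx : x ∈ 𝔹)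
    (hf : ContinuousOn f 𝔻) :
    Tendsto (fun ε => ∫ y in 𝔹, f y * lap (lap (regBoggio ε x)) y) (nhdsWithin 0 (Set.Ioi 0))
      (nhds (16 * Real.pi ^ 2 * f x)) := by
  rw [← zero_add (16 * _ * _)]
  refine ((tendsto_integral_mul_lap_lap_regBoggio_sub hx hf).add
    (tendsto_setIntegral_bubble_mul hx hf)).congr' ?_
  filter_upwards [self_mem_nhdsWithin] with ε hε
  have hε : 0 < ε := hε
  have hβ : Continuous fun y => 96 * ε ^ 2 * ((‖x - y‖ ^ 2 + ε) ^ 4)⁻¹ := by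
    fun_prop (disch := intros; positivity)
  have hβB := integrableOn_interior (isCompact_closedBall 0 1) (hf.fun_mul hβ.continuousOn)
  rw [interior_closedBall (0 : ℝ⁴) one_ne_zero] at hβB
  have hlap :=
    integrableOn_mul_lap_lap hf (contDiffOn_regBoggio (ball_subset_closedBall hx) hε)
  simp only [mul_sub]
  rw [integral_sub hlap hβB, sub_add_cancel]

theorem green_representation {u : ℝ⁴ → ℝ} (hu : ContDiffOn ℝ 4 u 𝔻)
    (hu0 : HasZeroDirichletData 𝔻 u) (hx : x ∈ 𝔹) :
    ∫ y in 𝔹, boggioKernel x y * lap (lap u) y = 16 * Real.pi ^ 2 * u x := by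
  have hint : interior 𝔻 = 𝔹 := interior_closedBall 0 one_ne_zero
  obtain ⟨F, hF, hFu⟩ := exists_continuousOn_eqOn_lap_lap hu
  have hkernel := tendsto_integral_regBoggio_mul hx hF
  have hF_eq (w : ℝ⁴ → ℝ) : ∫ y in 𝔹, w y * F y = ∫ y in 𝔹, w y * lap (lap u) y :=
    setIntegral_congr_fun measurableSet_ball fun y hy => congrArg (w y * ·) (hFu hy).symm
  simp only [hF_eq] at hkernel
  refine tendsto_nhds_unique hkernel
    ((tendsto_integral_mul_lap_lap_regBoggio hx hu.continuousOn).congr' ?_)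
  filter_upwards [self_mem_nhdsWithin] with ε hε
  have h := integral_mul_lap_lap_comm (isCompact_closedBall 0 1) (convex_closedBall 0 1)
    (by simp [hint]) hu (contDiffOn_regBoggio (ball_subset_closedBall hx) hε) hu0
    (hasZeroDirichletData_regBoggio hε)
  rw [hint] at h
  exact h.symm

end GreenRepresentation

section PlaneReflection

variable {E : Type*} [NormedAddCommGroup E] [InnerProductSpace ℝ E] {e x y : E} {μ : ℝ}

/-- The reflection in the hyperplane `⟪e, x⟫ = μ`, for a unit vector `e`. -/
def planeReflection (e : E) (μ : ℝ) (x : E) : E :=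
  x - (2 * (inner ℝ e x - μ)) • e

/-- The cap cut off from the unit ball by the hyperplane `⟪e, x⟫ = μ`. -/
def cap (e : E) (μ : ℝ) : Set E :=
  {x | ‖x‖ < 1 ∧ μ < inner ℝ e x}

lemma continuous_planeReflection (e : E) (μ : ℝ) : Continuous (planeReflection e μ) := by
  unfold planeReflection
  fun_prop

lemma continuous_planeReflection_offset (e x : E) : Continuous fun μ => planeReflection e μ x := by
  unfold planeReflection
  fun_prop

lemma inner_planeReflection (he : ‖e‖ = 1) (μ : ℝ) (x : E) :
    inner ℝ e (planeReflection e μ x) = 2 * μ - inner ℝ e x := by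
  rw [planeReflection, inner_sub_right, inner_smul_right, real_inner_self_eq_norm_sq, he]
  ring

lemma planeReflection_involutive (he : ‖e‖ = 1) (μ : ℝ) :
    Function.Involutive (planeReflection e μ) := by
  intro x
  rw [planeReflection, inner_planeReflection he, planeReflection]
  module

lemma norm_planeReflection_sub_sq (he : ‖e‖ = 1) (μ : ℝ) (x y : E) :
    ‖planeReflection e μ x - y‖ ^ 2 =
      ‖x - y‖ ^ 2 + 4 * (inner ℝ e x - μ) * (inner ℝ e y - μ) := by
  have hsub : planeReflection e μ x - y = (x - y) - (2 * (inner ℝ e x - μ)) • e := by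
    unfold planeReflection
    abel
  rw [hsub, norm_sub_sq_real, norm_smul, inner_smul_right, real_inner_comm e (x - y),
    inner_sub_right, he, Real.norm_eq_abs, mul_one, sq_abs]
  ring

lemma norm_planeReflection_sq (he : ‖e‖ = 1) (μ : ℝ) (x : E) :
    ‖planeReflection e μ x‖ ^ 2 = ‖x‖ ^ 2 - 4 * μ * (inner ℝ e x - μ) := by
  have h := norm_planeReflection_sub_sq he μ x 0
  simp only [sub_zero, inner_zero_right] at h
  rw [h]
  ring

lemma norm_planeReflection_sub_planeReflection (he : ‖e‖ = 1) (μ : ℝ) (x y : E) :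
    ‖planeReflection e μ x - planeReflection e μ y‖ = ‖x - y‖ := by
  refine (sq_eq_sq₀ (norm_nonneg _) (norm_nonneg _)).1 ?_
  rw [norm_planeReflection_sub_sq he, inner_planeReflection he, norm_sub_rev,
    norm_planeReflection_sub_sq he, norm_sub_rev]
  ring

lemma exists_planeReflection_eq (hne : x ≠ y) :
    ∃ e : E, ‖e‖ = 1 ∧ planeReflection e ((‖y‖ ^ 2 - ‖x‖ ^ 2) / (2 * ‖y - x‖)) y = x ∧
      (‖y‖ ^ 2 - ‖x‖ ^ 2) / (2 * ‖y - x‖) < inner ℝ e y := by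
  have hd : 0 < ‖y - x‖ := norm_pos_iff.2 (sub_ne_zero.2 hne.symm)
  have hinner : inner ℝ (‖y - x‖⁻¹ • (y - x)) y - (‖y‖ ^ 2 - ‖x‖ ^ 2) / (2 * ‖y - x‖) =
      ‖y - x‖ / 2 := by
    have hsq := norm_sub_sq_real y x
    rw [inner_smul_left, inner_sub_left, real_inner_self_eq_norm_sq, real_inner_comm]
    simp only [map_inv₀, conj_trivial]
    field_simp
    linarith
  refine ⟨‖y - x‖⁻¹ • (y - x), ?_, ?_, by linarith⟩
  · rw [norm_smul, norm_inv, norm_norm, inv_mul_cancel₀ hd.ne']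
  · rw [planeReflection, hinner, smul_smul, mul_div_cancel₀ _ two_ne_zero,
      mul_inv_cancel₀ hd.ne', one_smul, sub_sub_cancel]

lemma isOpen_cap (e : E) (μ : ℝ) : IsOpen (cap e μ) :=
  (isOpen_lt continuous_norm continuous_const).inter
    (isOpen_lt continuous_const (by fun_prop : Continuous fun x : E => inner ℝ e x))

lemma cap_subset_ball (e : E) (μ : ℝ) : cap e μ ⊆ ball 0 1 :=
  fun _ hx => mem_ball_zero_iff.2 hx.1

lemma planeReflection_mem_ball (he : ‖e‖ = 1) (hμ : 0 ≤ μ) (hx : x ∈ cap e μ) :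
    planeReflection e μ x ∈ ball (0 : E) 1 := by
  rw [mem_ball_zero_iff, ← sq_lt_one_iff₀ (norm_nonneg _), norm_planeReflection_sq he]
  have hx1 : ‖x‖ ^ 2 < 1 := (sq_lt_one_iff₀ (norm_nonneg _)).2 hx.1
  linarith [mul_nonneg hμ (sub_nonneg.2 hx.2.le)]

end PlaneReflection

section ReflectedKernel

lemma monotoneOn_boggioProfile_sub_div {τ : ℝ} (hτ : 1 ≤ τ) :
    MonotoneOn (fun s => boggioProfile s - boggioProfile (s / τ)) (Set.Ici 0) := by
  have hderiv {s : ℝ} (hs : 0 ≤ s) :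
      HasDerivAt (fun s => boggioProfile s - boggioProfile (s / τ))
        (s / (1 + s) ^ 2 - s / τ / (1 + s / τ) ^ 2 * (1 / τ)) s := by
    have hsτ : 0 ≤ s / τ := by positivity
    exact (hasDerivAt_boggioProfile (by linarith)).sub
      ((hasDerivAt_boggioProfile (by linarith)).comp s ((hasDerivAt_id s).div_const τ))
  refine monotoneOn_of_deriv_nonneg (convex_Ici 0)
    (fun s hs => (hderiv hs).continuousAt.continuousWithinAt) ?_ ?_ <;> rw [interior_Ici]
  · exact fun s hs => (hderiv (le_of_lt hs)).differentiableAt.differentiableWithinAt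
  · intro s hs
    have hs : 0 < s := hs
    have hτs : s / τ / (1 + s / τ) ^ 2 * (1 / τ) = s / (τ + s) ^ 2 := by field_simp
    rw [(hderiv hs.le).deriv, hτs, sub_nonneg]
    gcongr

lemma boggioProfile_four_point {p p' q q' t T : ℝ} (hp : 0 < p) (hpp' : p < p') (hq : 0 < q)
    (hqq' : q ≤ q') (ht : 0 < t) (htT : t ≤ T) :
    boggioProfile (p * q / t) + boggioProfile (p * q' / T) <
      boggioProfile (p' * q' / t) + boggioProfile (p' * q / T) := by
  have hT : 0 < T := ht.trans_le htT
  have hq' : 0 < q' := hq.trans_le hqq'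
  have hp' : 0 < p' := hp.trans hpp'
  have h₁ : boggioProfile (p * q' / t) < boggioProfile (p' * q' / t) :=
    strictMonoOn_boggioProfile (Set.mem_Ici.2 (by positivity)) (Set.mem_Ici.2 (by positivity))
      (by gcongr)
  have h₂ : boggioProfile (p * q / T) < boggioProfile (p' * q / T) :=
    strictMonoOn_boggioProfile (Set.mem_Ici.2 (by positivity)) (Set.mem_Ici.2 (by positivity))
      (by gcongr)
  have h₃ := monotoneOn_boggioProfile_sub_div ((one_le_div ht).2 htT)
    (a := p * q / t) (b := p * q' / t) (Set.mem_Ici.2 (by positivity))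
    (Set.mem_Ici.2 (by positivity)) (by gcongr)
  simp only [div_div_div_cancel_right₀ ht.ne'] at h₃
  linarith

variable {E : Type*} [NormedAddCommGroup E] [InnerProductSpace ℝ E] {e x y : E} {μ : ℝ}

/-- The gain of the Boggio kernel when its pole `x` is moved to the mirror image of `x`. -/
def boggioGap (e : E) (μ : ℝ) (x y : E) : ℝ :=
  boggioKernel (planeReflection e μ x) y - boggioKernel x y

lemma boggioGap_nonneg (he : ‖e‖ = 1) (hμ : 0 ≤ μ) (hx : x ∈ cap e μ) (hy : y ∈ ball (0 : E) 1)
    (hyμ : inner ℝ e y ≤ μ) (hne : planeReflection e μ x ≠ y) : 0 ≤ boggioGap e μ x y := by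
  have hx0 : 0 ≤ inner ℝ e x - μ := sub_nonneg.2 hx.2.le
  have hp := one_sub_norm_sq_pos (cap_subset_ball e μ hx)
  have hp' := one_sub_norm_sq_pos (planeReflection_mem_ball he hμ hx)
  have hq := one_sub_norm_sq_pos hy
  have hpp' : 1 - ‖x‖ ^ 2 ≤ 1 - ‖planeReflection e μ x‖ ^ 2 := by
    rw [norm_planeReflection_sq he]
    linarith [mul_nonneg hμ hx0]
  have ht : 0 < ‖planeReflection e μ x - y‖ ^ 2 := by
    have := norm_pos_iff.2 (sub_ne_zero.2 hne)
    positivity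
  have htT : ‖planeReflection e μ x - y‖ ^ 2 ≤ ‖x - y‖ ^ 2 := by
    rw [norm_planeReflection_sub_sq he]
    linarith [mul_nonneg hx0 (sub_nonneg.2 hyμ)]
  exact sub_nonneg.2 (strictMonoOn_boggioProfile.monotoneOn (Set.mem_Ici.2 (by positivity))
    (Set.mem_Ici.2 (by positivity)) (by gcongr))

lemma boggioGap_planeReflection_nonneg (he : ‖e‖ = 1) (hμ : 0 ≤ μ) (hx : x ∈ cap e μ)
    (hy : y ∈ cap e μ) (hne : x ≠ y) : 0 ≤ boggioGap e μ x (planeReflection e μ y) :=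
  boggioGap_nonneg he hμ hx (planeReflection_mem_ball he hμ hy)
    (by linarith [inner_planeReflection he μ y, hy.2])
    ((planeReflection_involutive he μ).injective.ne hne)

lemma boggioGap_planeReflection_le_inv (he : ‖e‖ = 1) (hμ : 0 ≤ μ) (hx : x ∈ cap e μ)
    (hy : y ∈ cap e μ) : boggioGap e μ x (planeReflection e μ y) ≤ (‖x - y‖ ^ 2)⁻¹ := by
  have hy' := (mem_ball_zero_iff.1 (planeReflection_mem_ball he hμ hy)).le
  have hle := boggioKernel_le_inv (mem_ball_zero_iff.1 (planeReflection_mem_ball he hμ hx)).le hy'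
  rw [norm_planeReflection_sub_planeReflection he] at hle
  exact (sub_le_self _ (boggioKernel_nonneg hx.1.le hy')).trans hle

lemma boggioGap_add_planeReflection_pos (he : ‖e‖ = 1) (hμ : 0 < μ) (hx : x ∈ cap e μ)
    (hy : y ∈ cap e μ) (hne : x ≠ y) :
    0 < boggioGap e μ x y + boggioGap e μ x (planeReflection e μ y) := by
  have ht : 0 < ‖x - y‖ ^ 2 := by
    have := norm_pos_iff.2 (sub_ne_zero.2 hne)
    positivity
  have hnorm {z : E} (hz : z ∈ cap e μ) : 1 - ‖z‖ ^ 2 < 1 - ‖planeReflection e μ z‖ ^ 2 := by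
    rw [norm_planeReflection_sq he]
    linarith [mul_pos hμ (sub_pos.2 hz.2)]
  have htT : ‖x - y‖ ^ 2 ≤ ‖planeReflection e μ x - y‖ ^ 2 := by
    rw [norm_planeReflection_sub_sq he]
    linarith [mul_pos (sub_pos.2 hx.2) (sub_pos.2 hy.2)]
  have hcross : ‖x - planeReflection e μ y‖ = ‖planeReflection e μ x - y‖ := by
    rw [← norm_planeReflection_sub_planeReflection he μ x, planeReflection_involutive he]
  have h := boggioProfile_four_point (one_sub_norm_sq_pos (cap_subset_ball e μ hx)) (hnorm hx)
    (one_sub_norm_sq_pos (cap_subset_ball e μ hy)) (hnorm hy).le ht htT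
  simp only [boggioGap, boggioKernel, hcross, norm_planeReflection_sub_planeReflection he]
  linarith

end ReflectedKernel

section FoldedIntegral

lemma measurePreserving_planeReflection {E : Type*} [NormedAddCommGroup E]
    [InnerProductSpace ℝ E] [FiniteDimensional ℝ E] [MeasurableSpace E] [BorelSpace E] {e : E}
    (he : ‖e‖ = 1) (μ : ℝ) : MeasurePreserving (planeReflection e μ) volume volume := by
  have hcomp : planeReflection e μ = (· + (2 * μ) • e) ∘ (Submodule.reflection (ℝ ∙ e)ᗮ) := by
    funext x
    simp only [Function.comp, Submodule.reflection_orthogonal_apply,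
      Submodule.reflection_singleton_apply, he, planeReflection, one_pow, div_one,
      RCLike.ofReal_real_eq_id, id, two_smul]
    module
  rw [hcomp]
  exact (measurePreserving_add_right volume _).comp
    (Submodule.reflection (ℝ ∙ e)ᗮ).measurePreserving

lemma measurableEmbedding_planeReflection {E : Type*} [NormedAddCommGroup E]
    [InnerProductSpace ℝ E] [MeasurableSpace E] [BorelSpace E] {e : E} (he : ‖e‖ = 1) (μ : ℝ) :
    MeasurableEmbedding (planeReflection e μ) :=
  (Homeomorph.mk ((planeReflection_involutive he μ).toPerm _) (continuous_planeReflection e μ)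
    (continuous_planeReflection e μ)).measurableEmbedding

variable {e x : ℝ⁴} {μ : ℝ} {F : ℝ⁴ → ℝ}

lemma integrableOn_boggioKernel_mul (hF : ContinuousOn F 𝔻) (hx : x ∈ 𝔹) :
    IntegrableOn (fun y => boggioKernel x y * F y) 𝔹 := by
  obtain ⟨C, hC⟩ := (isCompact_closedBall (0 : ℝ⁴) 1).exists_bound_of_continuousOn hF
  have hmeas : Measurable (boggioKernel x) := by
    unfold boggioKernel boggioProfile
    fun_prop
  refine ((integrableOn_inv_norm_sub_sq hx).mul_const C).mono'
    (hmeas.aestronglyMeasurable.mul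
      ((hF.mono ball_subset_closedBall).aestronglyMeasurable measurableSet_ball)) ?_
  filter_upwards [ae_restrict_mem measurableSet_ball] with y hy
  have hxn := (mem_ball_zero_iff.1 hx).le
  have hyn := (mem_ball_zero_iff.1 hy).le
  rw [norm_mul, Real.norm_of_nonneg (boggioKernel_nonneg hxn hyn)]
  exact mul_le_mul (boggioKernel_le_inv hxn hyn) (hC y (ball_subset_closedBall hy))
    (norm_nonneg _) (by positivity)

lemma boggioGap_mul (e : ℝ⁴) (μ : ℝ) (x : ℝ⁴) (F : ℝ⁴ → ℝ) :
    (fun y => boggioGap e μ x y * F y) =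
      fun y => boggioKernel (planeReflection e μ x) y * F y - boggioKernel x y * F y :=
  funext fun _ => sub_mul _ _ _

lemma integrableOn_boggioGap_mul (hF : ContinuousOn F 𝔻) (he : ‖e‖ = 1) (hμ : 0 ≤ μ)
    (hx : x ∈ cap e μ) : IntegrableOn (fun y => boggioGap e μ x y * F y) 𝔹 := by
  rw [boggioGap_mul]
  exact (integrableOn_boggioKernel_mul hF (planeReflection_mem_ball he hμ hx)).sub
    (integrableOn_boggioKernel_mul hF (cap_subset_ball e μ hx))

lemma planeReflection_preimage_cap_subset (he : ‖e‖ = 1) (hμ : 0 ≤ μ) :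
    planeReflection e μ ⁻¹' cap e μ ⊆ 𝔹 \ cap e μ := by
  intro y hy
  refine ⟨?_, fun hyc => ?_⟩
  · rw [← planeReflection_involutive he μ y]
    exact planeReflection_mem_ball he hμ hy
  · have hinner := hy.2
    rw [inner_planeReflection he] at hinner
    linarith [hyc.2]

/-- The integrand obtained from `boggioGap e μ x * F` by folding the mirror image of the cap
back onto the cap. -/
def foldedGap (e : ℝ⁴) (μ : ℝ) (F : ℝ⁴ → ℝ) (x y : ℝ⁴) : ℝ :=
  boggioGap e μ x y * F y +
    boggioGap e μ x (planeReflection e μ y) * F (planeReflection e μ y)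

lemma planeReflection_preimage_preimage (he : ‖e‖ = 1) (μ : ℝ) (s : Set ℝ⁴) :
    planeReflection e μ ⁻¹' (planeReflection e μ ⁻¹' s) = s := by
  rw [← Set.preimage_comp, (planeReflection_involutive he μ).comp_self, Set.preimage_id]

lemma integrableOn_comp_planeReflection_cap (hF : ContinuousOn F 𝔻) (he : ‖e‖ = 1) (hμ : 0 ≤ μ)
    (hx : x ∈ cap e μ) : IntegrableOn (fun y => boggioGap e μ x (planeReflection e μ y) *
      F (planeReflection e μ y)) (cap e μ) := by
  have h := ((measurePreserving_planeReflection he μ).integrableOn_comp_preimage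
    (measurableEmbedding_planeReflection he μ)).2 ((integrableOn_boggioGap_mul hF he hμ hx).mono_set
      ((planeReflection_preimage_cap_subset he hμ).trans Set.sdiff_subset))
  rwa [planeReflection_preimage_preimage he] at h

lemma integrableOn_foldedGap (hF : ContinuousOn F 𝔻) (he : ‖e‖ = 1) (hμ : 0 ≤ μ)
    (hx : x ∈ cap e μ) : IntegrableOn (foldedGap e μ F x) (cap e μ) :=
  ((integrableOn_boggioGap_mul hF he hμ hx).mono_set (cap_subset_ball e μ)).add
    (integrableOn_comp_planeReflection_cap hF he hμ hx)

lemma setIntegral_foldedGap_le (hF : ContinuousOn F 𝔻) (hF0 : ∀ y ∈ 𝔹, 0 ≤ F y) (he : ‖e‖ = 1)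
    (hμ : 0 ≤ μ) (hx : x ∈ cap e μ) :
    ∫ y in cap e μ, foldedGap e μ F x y ≤ (∫ y in 𝔹, boggioKernel (planeReflection e μ x) y * F y) -
      ∫ y in 𝔹, boggioKernel x y * F y := by
  set G : ℝ⁴ → ℝ := fun y => boggioGap e μ x y * F y
  have hcap : MeasurableSet (cap e μ) := (isOpen_cap e μ).measurableSet
  have hG : IntegrableOn G 𝔹 := integrableOn_boggioGap_mul hF he hμ hx
  have hGdiff : IntegrableOn G (𝔹 \ cap e μ) := hG.mono_set Set.sdiff_subset
  have hsplit : ∫ y in 𝔹, G y = (∫ y in cap e μ, G y) + ∫ y in 𝔹 \ cap e μ, G y := by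
    rw [← setIntegral_union Set.disjoint_sdiff_right (measurableSet_ball.diff hcap)
      (hG.mono_set (cap_subset_ball e μ)) hGdiff, Set.union_sdiff_cancel (cap_subset_ball e μ)]
  have hfold : ∫ y in cap e μ, G (planeReflection e μ y) =
      ∫ y in planeReflection e μ ⁻¹' cap e μ, G y := by
    rw [← (measurePreserving_planeReflection he μ).setIntegral_preimage_emb
      (measurableEmbedding_planeReflection he μ)]
    simp only [planeReflection_involutive he μ _]
  have hGnonneg : 0 ≤ᵐ[volume.restrict (𝔹 \ cap e μ)] G := by
    filter_upwards [ae_restrict_mem (measurableSet_ball.diff hcap),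
      ae_restrict_of_ae (Measure.ae_ne volume (planeReflection e μ x))] with y hy hne
    have hyμ : inner ℝ e y ≤ μ := not_lt.1 fun h => hy.2 ⟨mem_ball_zero_iff.1 hy.1, h⟩
    exact mul_nonneg (boggioGap_nonneg he hμ hx hy.1 hyμ hne.symm) (hF0 y hy.1)
  calc ∫ y in cap e μ, foldedGap e μ F x y
      = (∫ y in cap e μ, G y) + ∫ y in planeReflection e μ ⁻¹' cap e μ, G y := by
        rw [← hfold]
        exact integral_add (hG.mono_set (cap_subset_ball e μ))
          (integrableOn_comp_planeReflection_cap hF he hμ hx)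
    _ ≤ ∫ y in 𝔹, G y := by
        rw [hsplit]
        exact add_le_add_right (setIntegral_mono_set hGdiff hGnonneg
          (planeReflection_preimage_cap_subset he hμ).eventuallyLE) _
    _ = _ := by
        rw [← integral_sub (integrableOn_boggioKernel_mul hF (planeReflection_mem_ball he hμ hx))
          (integrableOn_boggioKernel_mul hF (cap_subset_ball e μ hx)), ← boggioGap_mul]

lemma ae_mem_cap_and_ne (e : ℝ⁴) (μ : ℝ) (x : ℝ⁴) :
    ∀ᵐ y ∂volume.restrict (cap e μ), y ∈ cap e μ ∧ x ≠ y := by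
  filter_upwards [ae_restrict_mem (isOpen_cap e μ).measurableSet,
    ae_restrict_of_ae (Measure.ae_ne volume x)] with y hy hne using ⟨hy, hne.symm⟩

end FoldedIntegral

section AbsoluteContinuity

lemma exists_pos_setIntegral_norm_comp_sub_left_lt {g : ℝ⁴ → ℝ} (hg : Integrable g) {ε : ℝ}
    (hε : 0 < ε) : ∃ η : ENNReal, 0 < η ∧ ∀ x : ℝ⁴, ∀ s : Set ℝ⁴, volume s < η →
      ∫ y in s, ‖g (x - y)‖ < ε := by
  obtain ⟨η, hη, h⟩ := exists_pos_setLIntegral_lt_of_measure_lt hg.hasFiniteIntegral.ne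
    (ENNReal.ofReal_pos.2 hε).ne'
  refine ⟨η, hη, fun x s hs => ?_⟩
  have hmp := Measure.measurePreserving_sub_left (volume : Measure ℝ⁴) x
  have hemb : MeasurableEmbedding (x - · : ℝ⁴ → ℝ⁴) :=
    (MeasurableEquiv.subLeft x).measurableEmbedding
  have hpre : (x - · : ℝ⁴ → ℝ⁴) ⁻¹' ((x - ·) ⁻¹' s) = s := by
    ext y
    simp only [Set.mem_preimage, sub_sub_cancel]
  have hlt := h ((x - ·) ⁻¹' s) (by rwa [hmp.measure_preimage_emb hemb])
  rw [← hmp.setLIntegral_comp_preimage_emb hemb, hpre,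
    ← ofReal_integral_norm_eq_lintegral_enorm (hg.comp_sub_left x).integrableOn] at hlt
  exact (ENNReal.ofReal_lt_ofReal_iff hε).1 hlt

lemma exists_pos_setIntegral_inv_norm_sub_sq_lt {ε : ℝ} (hε : 0 < ε) :
    ∃ η : ENNReal, 0 < η ∧ ∀ x ∈ 𝔹, ∀ s ⊆ 𝔹, MeasurableSet s → volume s < η →
      ∫ y in s, (‖x - y‖ ^ 2)⁻¹ < ε := by
  obtain ⟨η, hη, h⟩ := exists_pos_setIntegral_norm_comp_sub_left_lt
    (integrable_indicator_inv_norm_sq 2) hε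
  refine ⟨η, hη, fun x hx s hs hsm hsη => ?_⟩
  refine (setIntegral_congr_fun hsm fun y hy => ?_).trans_lt (h x s hsη)
  simp only [indicator_inv_norm_sq_sub hx (hs hy), norm_inv, norm_pow, norm_norm]

lemma ae_inner_ne {e : ℝ⁴} (he : e ≠ 0) (μ : ℝ) : ∀ᵐ y : ℝ⁴, inner ℝ e y ≠ μ := by
  have hker : volume ((innerSL ℝ e).ker : Set ℝ⁴) = 0 := by
    refine Measure.addHaar_submodule _ _ fun htop => ?_
    have hmem : e ∈ (innerSL ℝ e).ker := htop ▸ Submodule.mem_top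
    exact he (inner_self_eq_zero.1 hmem)
  have hshift : volume ((· + -((μ / ‖e‖ ^ 2) • e)) ⁻¹' ((innerSL ℝ e).ker : Set ℝ⁴)) = 0 := by
    rw [measure_preimage_add_right, hker]
  filter_upwards [measure_eq_zero_iff_ae_notMem.1 hshift] with y hy hyμ
  have hne : ‖e‖ ≠ 0 := norm_ne_zero_iff.2 he
  refine hy (show inner ℝ e (y + -((μ / ‖e‖ ^ 2) • e)) = 0 from ?_)
  rw [inner_add_right, inner_neg_right, inner_smul_right, real_inner_self_eq_norm_sq, hyμ]
  field_simp
  ring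

end AbsoluteContinuity

section MovingPlanes

/-- The integral form, through Boggio's Green function, of the Dirichlet problem
`Δ²U = f(U)` on the unit ball with `U = 0` and `DU = 0` on the unit sphere. -/
structure IsGreenSolution (f : ℝ → ℝ) (U : ℝ⁴ → ℝ) : Prop where
  continuous : Continuous U
  integral_eq : ∀ x ∈ 𝔹, ∫ y in 𝔹, boggioKernel x y * f (U y) = 16 * Real.pi ^ 2 * U x

/-- The moving plane inequality: on the cap, `U` is at most its value at the mirror image. -/
def IsReflectionDominated (U : ℝ⁴ → ℝ) (e : ℝ⁴) (μ : ℝ) : Prop :=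
  ∀ x ∈ cap e μ, U x ≤ U (planeReflection e μ x)

/-- The part of the cap on which the moving plane inequality fails. -/
def reflectionDefect (U : ℝ⁴ → ℝ) (e : ℝ⁴) (μ : ℝ) : Set ℝ⁴ :=
  {y ∈ cap e μ | U (planeReflection e μ y) < U y}

variable {f : ℝ → ℝ} {U : ℝ⁴ → ℝ} {e : ℝ⁴} {μ : ℝ}

lemma reflectionDefect_subset_cap (U : ℝ⁴ → ℝ) (e : ℝ⁴) (μ : ℝ) :
    reflectionDefect U e μ ⊆ cap e μ :=
  Set.sep_subset _ _

lemma isClosed_setOf_isReflectionDominated (hU : Continuous U) (e : ℝ⁴) :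
    IsClosed {μ : ℝ | IsReflectionDominated U e μ} := by
  have hset : {μ : ℝ | IsReflectionDominated U e μ} =
      ⋂ x ∈ 𝔹, {μ : ℝ | inner ℝ e x ≤ μ} ∪ {μ : ℝ | U x ≤ U (planeReflection e μ x)} := by
    ext μ
    simp only [IsReflectionDominated, cap, Set.mem_ofPred_eq, Set.mem_iInter, Set.mem_union,
      mem_ball_zero_iff, and_imp, ← not_lt (a := μ), ← imp_iff_not_or]
  rw [hset]
  exact isClosed_biInter fun x _ => (isClosed_le continuous_const continuous_id).union
    (isClosed_le continuous_const (hU.comp (continuous_planeReflection_offset e x)))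

lemma isReflectionDominated_of_one_le (U : ℝ⁴ → ℝ) (he : ‖e‖ = 1) (hμ : 1 ≤ μ) :
    IsReflectionDominated U e μ := by
  intro x hx
  have hle := real_inner_le_norm e x
  rw [he, one_mul] at hle
  linarith [hx.1, hx.2]

namespace IsGreenSolution

lemma setIntegral_foldedGap_le (hU : IsGreenSolution f U) (hf : Continuous f)
    (hf0 : ∀ t, 0 ≤ f t) (he : ‖e‖ = 1) (hμ : 0 ≤ μ) {x : ℝ⁴} (hx : x ∈ cap e μ) :
    ∫ y in cap e μ, foldedGap e μ (f ∘ U) x y ≤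
      16 * Real.pi ^ 2 * (U (planeReflection e μ x) - U x) := by
  rw [mul_sub, ← hU.integral_eq _ (planeReflection_mem_ball he hμ hx),
    ← hU.integral_eq _ (cap_subset_ball e μ hx)]
  exact _root_.setIntegral_foldedGap_le (hf.comp hU.continuous).continuousOn
    (fun y _ => hf0 (U y)) he hμ hx

lemma lt_planeReflection (hU : IsGreenSolution f U) (hf : Continuous f) (hfm : Monotone f)
    (hf0 : ∀ t, 0 < f t) (he : ‖e‖ = 1) (hμ : 0 < μ) (hdom : IsReflectionDominated U e μ)
    {x : ℝ⁴} (hx : x ∈ cap e μ) : U x < U (planeReflection e μ x) := by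
  have hle := hU.setIntegral_foldedGap_le hf (fun t => (hf0 t).le) he hμ.le hx
  have hae : ∀ᵐ y ∂volume.restrict (cap e μ), 0 < foldedGap e μ (f ∘ U) x y := by
    filter_upwards [ae_mem_cap_and_ne e μ x] with y ⟨hy, hne⟩
    have hsum := mul_pos (boggioGap_add_planeReflection_pos he hμ hx hy hne) (hf0 (U y))
    have hrefl := mul_nonneg (boggioGap_planeReflection_nonneg he hμ.le hx hy hne)
      (sub_nonneg.2 (hfm (hdom y hy)))
    simp only [foldedGap, Function.comp_apply]
    linarith
  have hint := integrableOn_foldedGap (hf.comp hU.continuous).continuousOn he hμ.le hx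
  have hsupp : Function.support (foldedGap e μ (f ∘ U) x) =ᵐ[volume.restrict (cap e μ)] Set.univ :=
    eventuallyEq_univ.2 (hae.mono fun y hy => hy.ne')
  have hpos : 0 < ∫ y in cap e μ, foldedGap e μ (f ∘ U) x y := by
    rw [integral_pos_iff_support_of_nonneg_ae (hae.mono fun y hy => hy.le) hint,
      measure_congr hsupp, Measure.restrict_apply_univ]
    exact (isOpen_cap e μ).measure_pos _ ⟨x, hx⟩
  exact sub_pos.1 (pos_of_mul_pos_right (hpos.trans_le hle) (by positivity))

end IsGreenSolution

lemma neg_le_foldedGap {K : NNReal} {M W : ℝ} (hfm : Monotone f) (hf0 : ∀ t, 0 ≤ f t)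
    (hfK : LipschitzOnWith K f (Set.Icc (-M) M)) (hUM : ∀ y ∈ 𝔹, U y ∈ Set.Icc (-M) M)
    (he : ‖e‖ = 1) (hμ : 0 < μ) (hW : ∀ y ∈ cap e μ, U y - U (planeReflection e μ y) ≤ W)
    {x y : ℝ⁴} (hx : x ∈ cap e μ) (hy : y ∈ cap e μ) (hne : x ≠ y) :
    (reflectionDefect U e μ).indicator
      (fun y => -(K * W) * (‖x - y‖ ^ 2)⁻¹) y ≤ foldedGap e μ (f ∘ U) x y := by
  have hsum := mul_nonneg (boggioGap_add_planeReflection_pos he hμ hx hy hne).le (hf0 (U y))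
  have hgap := boggioGap_planeReflection_nonneg he hμ.le hx hy hne
  have hexpand : foldedGap e μ (f ∘ U) x y =
      (boggioGap e μ x y + boggioGap e μ x (planeReflection e μ y)) * f (U y) -
        boggioGap e μ x (planeReflection e μ y) * (f (U y) - f (U (planeReflection e μ y))) := by
    simp only [foldedGap, Function.comp_apply]
    ring
  rw [hexpand]
  by_cases hlt : U (planeReflection e μ y) < U y
  · have hmem : y ∈ reflectionDefect U e μ := ⟨hy, hlt⟩
    rw [Set.indicator_of_mem hmem]
    have hlip := hfK.dist_le_mul _ (hUM y (cap_subset_ball e μ hy)) _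
      (hUM _ (planeReflection_mem_ball he hμ.le hy))
    rw [Real.dist_eq, Real.dist_eq, abs_of_pos (sub_pos.2 hlt)] at hlip
    have hdiff : f (U y) - f (U (planeReflection e μ y)) ≤ K * W :=
      (le_abs_self _).trans (hlip.trans (by gcongr; exact hW y hy))
    have hmul := mul_le_mul (boggioGap_planeReflection_le_inv he hμ.le hx hy) hdiff
      (sub_nonneg.2 (hfm hlt.le)) (by positivity)
    linarith
  · rw [Set.indicator_of_notMem (fun h => hlt h.2 : y ∉ reflectionDefect U e μ)]
    have hmul := mul_nonneg hgap (sub_nonneg.2 (hfm (not_lt.1 hlt)))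
    linarith

lemma measurableSet_reflectionDefect (hU : Continuous U) (e : ℝ⁴) (μ : ℝ) :
    MeasurableSet (reflectionDefect U e μ) :=
  ((isOpen_cap e μ).inter
    (isOpen_lt (hU.comp (continuous_planeReflection e μ)) hU)).measurableSet

namespace IsGreenSolution

lemma sub_planeReflection_le_half (hU : IsGreenSolution f U) {K : NNReal} {M W : ℝ}
    (hf : Continuous f) (hfm : Monotone f) (hf0 : ∀ t, 0 ≤ f t)
    (hfK : LipschitzOnWith K f (Set.Icc (-M) M)) (hUM : ∀ y ∈ 𝔹, U y ∈ Set.Icc (-M) M)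
    (he : ‖e‖ = 1) (hμ : 0 < μ) {x : ℝ⁴} (hx : x ∈ cap e μ)
    (hsmall : K * ∫ y in reflectionDefect U e μ, (‖x - y‖ ^ 2)⁻¹ ≤ 8 * Real.pi ^ 2) (hW0 : 0 ≤ W)
    (hW : ∀ y ∈ cap e μ, U y - U (planeReflection e μ y) ≤ W) :
    U x - U (planeReflection e μ x) ≤ W / 2 := by
  have hs := measurableSet_reflectionDefect hU.continuous e μ
  have hkernel : IntegrableOn (fun y => (‖x - y‖ ^ 2)⁻¹) (cap e μ) :=
    (integrableOn_inv_norm_sub_sq (cap_subset_ball e μ hx)).mono_set (cap_subset_ball e μ)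
  have hlower : -(K * W) * ∫ y in reflectionDefect U e μ, (‖x - y‖ ^ 2)⁻¹ ≤
      ∫ y in cap e μ, foldedGap e μ (f ∘ U) x y := by
    rw [← integral_const_mul, ← Set.inter_eq_right.2 (reflectionDefect_subset_cap U e μ),
      ← setIntegral_indicator hs]
    refine integral_mono_ae ((hkernel.const_mul _).indicator hs)
      (integrableOn_foldedGap (hf.comp hU.continuous).continuousOn he hμ.le hx) ?_
    filter_upwards [ae_mem_cap_and_ne e μ x] with y ⟨hy, hne⟩
      using neg_le_foldedGap hfm hf0 hfK hUM he hμ hW hx hy hne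
  have hupper := hU.setIntegral_foldedGap_le hf hf0 he hμ.le hx
  have hscaled := mul_le_mul_of_nonneg_right hsmall hW0
  have hpi : 0 < 16 * Real.pi ^ 2 := by positivity
  refine le_of_mul_le_mul_left (a := 16 * Real.pi ^ 2) ?_ hpi
  linarith

lemma exists_isReflectionDominated_of_volume_defect_lt (hU : IsGreenSolution f U)
    (hf : LocallyLipschitz f) (hfm : Monotone f) (hf0 : ∀ t, 0 ≤ f t) :
    ∃ η : ENNReal, 0 < η ∧ ∀ e : ℝ⁴, ‖e‖ = 1 → ∀ μ, 0 < μ →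
      volume (reflectionDefect U e μ) < η → IsReflectionDominated U e μ := by
  obtain ⟨M, hM⟩ := (isCompact_closedBall (0 : ℝ⁴) 1).exists_bound_of_continuousOn
    hU.continuous.continuousOn
  have hUM : ∀ y ∈ 𝔹, U y ∈ Set.Icc (-M) M := fun y hy =>
    abs_le.1 (hM y (ball_subset_closedBall hy))
  have hM0 : 0 ≤ M := (norm_nonneg _).trans (hM 0 (mem_closedBall_self zero_le_one))
  obtain ⟨K, hK⟩ := (hf.locallyLipschitzOn (s := Set.Icc (-M) M)).exists_lipschitzOnWith_of_compact
    isCompact_Icc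
  obtain ⟨η, hη, hsmall⟩ := exists_pos_setIntegral_inv_norm_sub_sq_lt
    (ε := 8 * Real.pi ^ 2 / (K + 1)) (by positivity)
  refine ⟨η, hη, fun e he μ hμ hvol => ?_⟩
  -- The integral equation halves the worst violation of the inequality, so there is none.
  have hhalf (W : ℝ) (hW0 : 0 ≤ W)
      (hW : ∀ y ∈ cap e μ, U y - U (planeReflection e μ y) ≤ W) (x : ℝ⁴) (hx : x ∈ cap e μ) :
      U x - U (planeReflection e μ x) ≤ W / 2 := by
    refine hU.sub_planeReflection_le_half hf.continuous hfm hf0 hK hUM he hμ hx ?_ hW0 hW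
    have hlt := hsmall x (cap_subset_ball e μ hx) _
      ((reflectionDefect_subset_cap U e μ).trans (cap_subset_ball e μ))
      (measurableSet_reflectionDefect hU.continuous e μ) hvol
    rw [lt_div_iff₀ (by positivity)] at hlt
    have hnonneg : 0 ≤ ∫ y in reflectionDefect U e μ, (‖x - y‖ ^ 2)⁻¹ :=
      integral_nonneg fun y => by positivity
    linarith
  have hgeom (n : ℕ) : ∀ x ∈ cap e μ, U x - U (planeReflection e μ x) ≤ 2 * M / 2 ^ n := by
    induction n with
    | zero =>
      intro x hx
      linarith [(hUM x (cap_subset_ball e μ hx)).2,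
        (hUM _ (planeReflection_mem_ball he hμ.le hx)).1]
    | succ n ih =>
      intro x hx
      rw [pow_succ, ← div_div]
      exact hhalf _ (by positivity) ih x hx
  intro x hx
  have hlim : Tendsto (fun n : ℕ => 2 * M / 2 ^ n) atTop (nhds 0) :=
    tendsto_const_nhds.div_atTop (tendsto_pow_atTop_atTop_of_one_lt one_lt_two)
  exact sub_nonpos.1 (ge_of_tendsto' hlim fun n => hgeom n x hx)

lemma tendsto_volume_reflectionDefect (hU : IsGreenSolution f U) (hf : Continuous f)
    (hfm : Monotone f) (hf0 : ∀ t, 0 < f t) (he : ‖e‖ = 1) (hμ : 0 < μ)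
    (hdom : IsReflectionDominated U e μ) :
    Tendsto (fun ν => volume (reflectionDefect U e ν)) (nhds μ) (nhds 0) := by
  rw [← measure_empty (μ := (volume : Measure ℝ⁴))]
  refine tendsto_measure_of_ae_tendsto_indicator (nhds μ) MeasurableSet.empty
    (fun ν => measurableSet_reflectionDefect hU.continuous e ν) measurableSet_ball
    measure_ball_lt_top.ne (Eventually.of_forall fun ν y hy => cap_subset_ball e ν hy.1) ?_
  -- Off the hyperplane `⟪e, y⟫ = μ` the inequality is strict, hence persists for nearby offsets.
  filter_upwards [ae_inner_ne (norm_ne_zero_iff.1 (he ▸ one_ne_zero)) μ] with y hy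
  simp only [Set.mem_empty_iff_false, iff_false]
  rcases hy.lt_or_gt with hlt | hgt
  · filter_upwards [lt_mem_nhds hlt] with ν hν hyν using lt_asymm hyν.1.2 hν
  · by_cases hyB : ‖y‖ < 1
    · have hstrict := hU.lt_planeReflection hf hfm hf0 he hμ hdom ⟨hyB, hgt⟩
      filter_upwards [(hU.continuous.comp
        (continuous_planeReflection_offset e y)).continuousAt.eventually (lt_mem_nhds hstrict)]
        with ν hν hyν using lt_asymm hν hyν.2
    · exact Eventually.of_forall fun ν hyν => hyB hyν.1.1

lemma eventually_isReflectionDominated (hU : IsGreenSolution f U) (hf : LocallyLipschitz f)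
    (hfm : Monotone f) (hf0 : ∀ t, 0 < f t) (he : ‖e‖ = 1) (hμ : 0 < μ)
    (hdom : IsReflectionDominated U e μ) : ∀ᶠ ν in nhds μ, IsReflectionDominated U e ν := by
  obtain ⟨η, hη, h⟩ :=
    hU.exists_isReflectionDominated_of_volume_defect_lt hf hfm fun t => (hf0 t).le
  filter_upwards [(hU.tendsto_volume_reflectionDefect hf.continuous hfm hf0 he hμ hdom).eventually
    (gt_mem_nhds hη), lt_mem_nhds hμ] with ν hν hν0 using h e he ν hν0 hν

lemma isReflectionDominated (hU : IsGreenSolution f U) (hf : LocallyLipschitz f)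
    (hfm : Monotone f) (hf0 : ∀ t, 0 < f t) (he : ‖e‖ = 1) (hμ : 0 ≤ μ) :
    IsReflectionDominated U e μ := by
  have hclosed := isClosed_setOf_isReflectionDominated hU.continuous e
  have hIoi : Set.Ioi 0 ⊆ {ν : ℝ | IsReflectionDominated U e ν} := by
    refine isPreconnected_Ioi.subset_of_closure_inter_subset
      (u := interior {ν : ℝ | IsReflectionDominated U e ν}) isOpen_interior ?_ ?_ |>.trans
      interior_subset
    · exact ⟨1, Set.mem_Ioi.2 one_pos, mem_interior_iff_mem_nhds.2
        (hU.eventually_isReflectionDominated hf hfm hf0 he one_pos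
          (isReflectionDominated_of_one_le U he le_rfl))⟩
    · rintro ν ⟨hν, hν0⟩
      exact mem_interior_iff_mem_nhds.2 (hU.eventually_isReflectionDominated hf hfm hf0 he hν0
        (closure_minimal interior_subset hclosed hν))
  have hIci := hclosed.closure_subset_iff.2 hIoi
  rw [closure_Ioi] at hIci
  exact hIci hμ

theorem le_of_norm_le (hU : IsGreenSolution f U) (hf : LocallyLipschitz f) (hfm : Monotone f)
    (hf0 : ∀ t, 0 < f t) {x y : ℝ⁴} (hy : y ∈ 𝔹) (hxy : ‖x‖ ≤ ‖y‖) : U y ≤ U x := by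
  rcases eq_or_ne x y with rfl | hne
  · exact le_rfl
  obtain ⟨e, he, hrefl, hcap⟩ := exists_planeReflection_eq hne
  have hμ : 0 ≤ (‖y‖ ^ 2 - ‖x‖ ^ 2) / (2 * ‖y - x‖) :=
    div_nonneg (sub_nonneg.2 (by gcongr)) (by positivity)
  have hdom := hU.isReflectionDominated hf hfm hf0 he hμ y ⟨mem_ball_zero_iff.1 hy, hcap⟩
  rwa [hrefl] at hdom

end IsGreenSolution

end MovingPlanes

section RadialFunctions

variable {W W' : ℝ → ℝ} {f : ℝ⁴ → ℝ} {x y : ℝ⁴} {r : ℝ}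

lemma setIntegral_ball_comp_norm (W : ℝ → ℝ) {R : ℝ} (hR : 0 ≤ R) :
    ∫ y in ball (0 : ℝ⁴) R, W ‖y‖ = 2 * Real.pi ^ 2 * ∫ r in (0 : ℝ)..R, r ^ 3 * W r := by
  have hball (y : ℝ⁴) :
      (ball (0 : ℝ⁴) R).indicator (fun y => W ‖y‖) y = (Set.Iio R).indicator W ‖y‖ := by
    by_cases h : ‖y‖ < R <;> simp [h]
  have hmul (r : ℝ) :
      r ^ 3 * (Set.Iio R).indicator W r = (Set.Iio R).indicator (fun r => r ^ 3 * W r) r := by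
    simp [Set.indicator_apply]
  rw [← integral_indicator measurableSet_ball]
  simp only [hball, integral_radial, hmul]
  rw [setIntegral_indicator measurableSet_Iio, Set.Ioi_inter_Iio,
    intervalIntegral.integral_of_le hR, integral_Ioc_eq_integral_Ioo]

lemma lap_comp_norm_sq {χ χ' : ℝ → ℝ} {d : ℝ}
    (hχ : ∀ᶠ s in nhds (‖y‖ ^ 2), HasDerivAt χ (χ' s) s) (hχ' : HasDerivAt χ' d (‖y‖ ^ 2)) :
    lap (fun z => χ (‖z‖ ^ 2)) y = 4 * ‖y‖ ^ 2 * d + 8 * χ' (‖y‖ ^ 2) := by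
  have hQ (z : ℝ⁴) : quad 1 0 0 z = ‖z‖ ^ 2 := by simp [quad]
  have hzero (t : ℝ) : HasDerivAt (fun _ : ℝ => (0 : ℝ)) ((fun _ => 0) t) t := hasDerivAt_const t 0
  have heq : (fun z : ℝ⁴ => χ (‖z‖ ^ 2)) = almansi 1 0 0 (fun _ => 0) χ := by
    ext z
    simp [almansi, hQ]
  rw [heq, lap_almansi (ψ'' := fun _ => 0) (χ'' := fun _ => d) (by simp) (.of_forall hzero)
    (by rwa [hQ]) (hzero _) (by rwa [hQ])]
  simp only [almansi, hQ]
  ring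

lemma lap_comp_norm {d : ℝ} (hy : y ≠ 0) (hW : ∀ᶠ s in nhds ‖y‖, HasDerivAt W (W' s) s)
    (hW' : HasDerivAt W' d ‖y‖) : lap (fun z => W ‖z‖) y = d + 3 * W' ‖y‖ / ‖y‖ := by
  have hr : 0 < ‖y‖ := norm_pos_iff.2 hy
  have hsqrt : √(‖y‖ ^ 2) = ‖y‖ := Real.sqrt_sq hr.le
  have hne : ‖y‖ ^ 2 ≠ 0 := by positivity
  have hχ : ∀ᶠ t in nhds (‖y‖ ^ 2),
      HasDerivAt (fun t => W √t) (W' √t * (1 / (2 * √t))) t := by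
    have hlim : Tendsto (√·) (nhds (‖y‖ ^ 2)) (nhds ‖y‖) :=
      Real.continuous_sqrt.tendsto' _ _ hsqrt
    filter_upwards [hlim.eventually hW, eventually_ne_nhds hne] with t ht ht0
      using ht.comp t (Real.hasDerivAt_sqrt ht0)
  have hd := Real.hasDerivAt_sqrt hne
  have hW'd : HasDerivAt (fun t => W' √t) (d * (1 / (2 * √(‖y‖ ^ 2)))) (‖y‖ ^ 2) :=
    HasDerivAt.comp (h₂ := W') _ (by rwa [hsqrt]) hd
  have hinv := (hasDerivAt_const (‖y‖ ^ 2) (1 : ℝ)).fun_div (hd.const_mul 2)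
    (by rw [hsqrt]; positivity)
  have heq : (fun z : ℝ⁴ => W ‖z‖) = fun z => W √(‖z‖ ^ 2) := by
    simp only [Real.sqrt_sq (norm_nonneg _)]
  rw [heq, lap_comp_norm_sq hχ (hW'd.fun_mul hinv), hsqrt]
  field_simp
  ring

/-- The values of `f` along the first coordinate axis. -/
def profile (f : ℝ⁴ → ℝ) (r : ℝ) : ℝ :=
  f (r • EuclideanSpace.single 0 1)

/-- On the open unit ball, `f` depends on the norm only; it is then given by its `profile`. -/
def IsRadialOnBall (f : ℝ⁴ → ℝ) : Prop :=
  ∀ x ∈ 𝔹, f x = profile f ‖x‖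

lemma norm_smul_single (r : ℝ) : ‖r • EuclideanSpace.single (0 : Fin 4) (1 : ℝ)‖ = |r| := by
  simp [norm_smul]

lemma continuousOn_profile (hf : ContinuousOn f 𝔻) : ContinuousOn (profile f) (Set.Icc 0 1) :=
  hf.comp (by fun_prop) fun r hr => by
    simpa [norm_smul_single, abs_of_nonneg hr.1] using hr.2

lemma smul_single_mem_ball (hr : r ∈ Set.Ioo (0 : ℝ) 1) : r • EuclideanSpace.single 0 1 ∈ 𝔹 := by
  simpa [norm_smul_single, abs_of_pos hr.1] using hr.2

lemma setIntegral_ball_of_isRadialOnBall (hf : IsRadialOnBall f) :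
    ∫ y in 𝔹, f y = 2 * Real.pi ^ 2 * ∫ r in (0 : ℝ)..1, r ^ 3 * profile f r := by
  rw [← setIntegral_ball_comp_norm _ zero_le_one]
  exact setIntegral_congr_fun measurableSet_ball hf

lemma hasDerivAt_profile (hf : ContDiffOn ℝ 1 f 𝔻) (hr : r ∈ Set.Ioo (0 : ℝ) 1) :
    HasDerivAt (profile f) (profile (partialWithin 𝔻 0 f) r) r := by
  have hmem := smul_single_mem_ball hr
  have hnhds := closedBall_mem_nhds_of_mem hmem
  have hd := ((hf.differentiableOn one_ne_zero).differentiableAt hnhds).hasFDerivAt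
  have hray : HasDerivAt (fun r : ℝ => r • EuclideanSpace.single (0 : Fin 4) (1 : ℝ)) _ r :=
    (hasDerivAt_id r).smul_const _
  refine (hd.comp_hasDerivAt r hray).congr_deriv ?_
  rw [profile, partialWithin_of_mem_interior 0 (ball_subset_interior_closedBall hmem), one_smul]

lemma lap_eq_of_isRadialOnBall (hf : ContDiffOn ℝ 2 f 𝔻) (hrad : IsRadialOnBall f) (hx : x ∈ 𝔹)
    (hx0 : x ≠ 0) :
    lap f x = deriv (profile (partialWithin 𝔻 0 f)) ‖x‖
      + 3 * profile (partialWithin 𝔻 0 f) ‖x‖ / ‖x‖ := by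
  have hr : ‖x‖ ∈ Set.Ioo (0 : ℝ) 1 := ⟨norm_pos_iff.2 hx0, mem_ball_zero_iff.1 hx⟩
  have hloc : f =ᶠ[nhds x] fun z => profile f ‖z‖ := by
    filter_upwards [isOpen_ball.mem_nhds hx] with z hz using hrad z hz
  have hf' : ContDiffOn ℝ 1 (partialWithin 𝔻 0 f) 𝔻 :=
    contDiffOn_partialWithin uniqueDiffOn_closedBall_zero_one hf
      one_add_one_eq_two.le 0
  rw [lap_congr hloc, lap_comp_norm hx0]
  · filter_upwards [isOpen_Ioo.mem_nhds hr] with s hs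
      using hasDerivAt_profile (hf.of_le one_le_two) hs
  · exact (hasDerivAt_profile hf' hr).differentiableAt.hasDerivAt

lemma hasDerivAt_profile_partialWithin (hf : ContDiffOn ℝ 2 f 𝔻) (hrad : IsRadialOnBall f)
    (hr : r ∈ Set.Ioo (0 : ℝ) 1) :
    HasDerivAt (profile (partialWithin 𝔻 0 f))
      (profile (lapWithin 𝔻 f) r - 3 * profile (partialWithin 𝔻 0 f) r / r) r := by
  have hmem := smul_single_mem_ball hr
  have hnorm : ‖r • EuclideanSpace.single (0 : Fin 4) (1 : ℝ)‖ = r := by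
    rw [norm_smul_single, abs_of_pos hr.1]
  have hlap := lap_eq_of_isRadialOnBall hf hrad hmem (norm_pos_iff.1 (hnorm.symm ▸ hr.1))
  rw [← lapWithin_of_mem_interior (ball_subset_interior_closedBall hmem), hnorm] at hlap
  have hf' : ContDiffOn ℝ 1 (partialWithin 𝔻 0 f) 𝔻 :=
    contDiffOn_partialWithin uniqueDiffOn_closedBall_zero_one hf one_add_one_eq_two.le 0
  refine (hasDerivAt_profile hf' hr).differentiableAt.hasDerivAt.congr_deriv ?_
  rw [profile, hlap, add_sub_cancel_right]

lemma isRadialOnBall_lapWithin (hf : ContDiffOn ℝ 2 f 𝔻) (hrad : IsRadialOnBall f) :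
    IsRadialOnBall (lapWithin 𝔻 f) := by
  intro x hx
  rcases eq_or_ne x 0 with rfl | hx0
  · simp [profile]
  have hr : ‖x‖ ∈ Set.Ioo (0 : ℝ) 1 := ⟨norm_pos_iff.2 hx0, mem_ball_zero_iff.1 hx⟩
  rw [lapWithin_of_mem_interior (ball_subset_interior_closedBall hx),
    lap_eq_of_isRadialOnBall hf hrad hx hx0,
    (hasDerivAt_profile_partialWithin hf hrad hr).deriv, sub_add_cancel]

end RadialFunctions

section RadialPohozaev

/-- `u'` and `v'` are the radial derivatives of `u` and `v = Δu` for a radial function `u` on the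
unit ball of `ℝ⁴` with `Δ²u = F` and `u' = 0` on the boundary; `u` itself does not occur. -/
structure IsRadialBiharmonic (F u' v v' : ℝ → ℝ) : Prop where
  continuousOn_rhs : ContinuousOn F (Set.Icc 0 1)
  continuousOn_gradient : ContinuousOn u' (Set.Icc 0 1)
  continuousOn_lap : ContinuousOn v (Set.Icc 0 1)
  continuousOn_gradient_lap : ContinuousOn v' (Set.Icc 0 1)
  hasDerivAt_gradient : ∀ r ∈ Set.Ioo (0 : ℝ) 1, HasDerivAt u' (v r - 3 * u' r / r) r
  hasDerivAt_lap : ∀ r ∈ Set.Ioo (0 : ℝ) 1, HasDerivAt v (v' r) r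
  hasDerivAt_gradient_lap : ∀ r ∈ Set.Ioo (0 : ℝ) 1, HasDerivAt v' (F r - 3 * v' r / r) r
  gradient_one : u' 1 = 0

namespace IsRadialBiharmonic

variable {F Φ u' v v' : ℝ → ℝ}

lemma integral_pow_three_mul (h : IsRadialBiharmonic F u' v v') :
    ∫ r in (0 : ℝ)..1, r ^ 3 * F r = v' 1 := by
  have hF := h.continuousOn_rhs
  have hv := h.continuousOn_gradient_lap
  rw [intervalIntegral.integral_eq_sub_of_hasDerivAt_of_le zero_le_one
    (f := fun r => r ^ 3 * v' r) (by fun_prop)]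
  · simp
  · intro r hr
    have hr0 : r ≠ 0 := hr.1.ne'
    refine ((hasDerivAt_pow 3 r).fun_mul (h.hasDerivAt_gradient_lap r hr)).congr_deriv ?_
    field_simp
    push_cast
    ring
  · exact ContinuousOn.intervalIntegrable_of_Icc zero_le_one (by fun_prop)

lemma integral_pow_five_mul (h : IsRadialBiharmonic F u' v v') :
    ∫ r in (0 : ℝ)..1, r ^ 5 * F r = v' 1 - 2 * v 1 := by
  have hF := h.continuousOn_rhs
  have hu := h.continuousOn_gradient
  have hv := h.continuousOn_lap
  have hv' := h.continuousOn_gradient_lap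
  rw [intervalIntegral.integral_eq_sub_of_hasDerivAt_of_le zero_le_one
    (f := fun r => 8 * (r ^ 3 * u' r) - 2 * (r ^ 4 * v r) + r ^ 5 * v' r) (by fun_prop)]
  · simp only [h.gradient_one]
    ring
  · intro r hr
    have hr0 : r ≠ 0 := hr.1.ne'
    refine (((((hasDerivAt_pow 3 r).fun_mul (h.hasDerivAt_gradient r hr)).const_mul 8).fun_sub
      (((hasDerivAt_pow 4 r).fun_mul (h.hasDerivAt_lap r hr)).const_mul 2)).fun_add
      ((hasDerivAt_pow 5 r).fun_mul (h.hasDerivAt_gradient_lap r hr))).congr_deriv ?_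
    field_simp
    push_cast
    ring
  · exact ContinuousOn.intervalIntegrable_of_Icc zero_le_one (by fun_prop)

lemma four_mul_integral_pow_three_mul_primitive (h : IsRadialBiharmonic F u' v v')
    (hΦ : ContinuousOn Φ (Set.Icc 0 1))
    (hΦ' : ∀ r ∈ Set.Ioo (0 : ℝ) 1, HasDerivAt Φ (F r * u' r) r) :
    4 * ∫ r in (0 : ℝ)..1, r ^ 3 * Φ r = v 1 ^ 2 / 2 + Φ 1 := by
  have hu := h.continuousOn_gradient
  have hv := h.continuousOn_lap
  have hv' := h.continuousOn_gradient_lap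
  rw [← intervalIntegral.integral_const_mul,
    intervalIntegral.integral_eq_sub_of_hasDerivAt_of_le zero_le_one
    (f := fun r => r ^ 4 * (Φ r + v r ^ 2 / 2 - v' r * u' r) - 2 * (r ^ 3 * (u' r * v r)))
    (by fun_prop)]
  · simp only [h.gradient_one]
    ring
  · intro r hr
    have hr0 : r ≠ 0 := hr.1.ne'
    have du := h.hasDerivAt_gradient r hr
    have dv := h.hasDerivAt_lap r hr
    have denergy := ((hΦ' r hr).fun_add ((dv.fun_pow 2).div_const 2)).fun_sub
      ((h.hasDerivAt_gradient_lap r hr).fun_mul du)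
    refine (((hasDerivAt_pow 4 r).fun_mul denergy).fun_sub
      (((hasDerivAt_pow 3 r).fun_mul (du.fun_mul dv)).const_mul 2)).congr_deriv ?_
    field_simp
    push_cast
    ring
  · exact ContinuousOn.intervalIntegrable_of_Icc zero_le_one (by fun_prop)

theorem pohozaev_identity (h : IsRadialBiharmonic F u' v v') (hΦ : ContinuousOn Φ (Set.Icc 0 1))
    (hΦ' : ∀ r ∈ Set.Ioo (0 : ℝ) 1, HasDerivAt Φ (F r * u' r) r) :
    ((∫ r in (0 : ℝ)..1, r ^ 3 * F r) - ∫ r in (0 : ℝ)..1, r ^ 5 * F r) ^ 2 + 8 * Φ 1 =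
      32 * ∫ r in (0 : ℝ)..1, r ^ 3 * Φ r := by
  rw [h.integral_pow_three_mul, h.integral_pow_five_mul]
  linear_combination (-8) * h.four_mul_integral_pow_three_mul_primitive hΦ hΦ'

end IsRadialBiharmonic

variable {u : ℝ⁴ → ℝ}

lemma contDiffOn_lapWithin_closedBall (hu : ContDiffOn ℝ 4 u 𝔻) :
    ContDiffOn ℝ 2 (lapWithin 𝔻 u) 𝔻 :=
  contDiffOn_lapWithin uniqueDiffOn_closedBall_zero_one hu (by norm_num)

lemma isRadialBiharmonic_profile (hu : ContDiffOn ℝ 4 u 𝔻) (hrad : IsRadialOnBall u)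
    (hu1 : fderivWithin ℝ u 𝔻 ((1 : ℝ) • EuclideanSpace.single 0 1) = 0) {F : ℝ → ℝ}
    (hF : ContinuousOn F (Set.Icc 0 1)) (hpde : ∀ x ∈ 𝔹, lap (lap u) x = F ‖x‖) :
    IsRadialBiharmonic F (profile (partialWithin 𝔻 0 u)) (profile (lapWithin 𝔻 u))
      (profile (partialWithin 𝔻 0 (lapWithin 𝔻 u))) where
  continuousOn_rhs := hF
  continuousOn_gradient := continuousOn_profile
    (contDiffOn_partialWithin uniqueDiffOn_closedBall_zero_one (n := 1) (m := 0)
      (hu.of_le (by norm_num)) (by norm_num) 0).continuousOn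
  continuousOn_lap := continuousOn_profile (contDiffOn_lapWithin_closedBall hu).continuousOn
  continuousOn_gradient_lap := continuousOn_profile
    (contDiffOn_partialWithin uniqueDiffOn_closedBall_zero_one
      (contDiffOn_lapWithin_closedBall hu) one_add_one_eq_two.le 0).continuousOn
  hasDerivAt_gradient r hr :=
    hasDerivAt_profile_partialWithin (hu.of_le (by norm_num)) hrad hr
  hasDerivAt_lap r hr :=
    hasDerivAt_profile ((contDiffOn_lapWithin_closedBall hu).of_le one_le_two) hr
  hasDerivAt_gradient_lap r hr := by
    have hmem := smul_single_mem_ball hr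
    have hint := ball_subset_interior_closedBall hmem
    refine (hasDerivAt_profile_partialWithin (contDiffOn_lapWithin_closedBall hu)
      (isRadialOnBall_lapWithin (hu.of_le (by norm_num)) hrad) hr).congr_deriv ?_
    rw [profile, lapWithin_of_mem_interior hint, lap_lapWithin_of_mem_interior hint, hpde _ hmem,
      norm_smul_single, abs_of_pos hr.1]
  gradient_one := by
    rw [profile, partialWithin, hu1, zero_apply]

end RadialPohozaev

section MeanFieldProfile

variable {l δ r : ℝ} {w : ℝ → ℝ}

/-- The moment `∫₀^δ rⁿ F(r) dr` of the mean field density `F = l·e^w`. For the radial function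
with profile `w` on `ℝ⁴`, the case `n = 3` is the mass of the ball of radius `δ`, divided
by `2π²`. -/
def radialMoment (n : ℕ) (l : ℝ) (w : ℝ → ℝ) (δ : ℝ) : ℝ :=
  ∫ r in (0 : ℝ)..δ, r ^ n * (l * Real.exp (w r))

/-- What the concentration argument needs to know about a radial solution of `Δ²u = l·e^u` with
profile `w`: monotonicity, the Pohozaev identity, the bounds obtained from the Green function near
the origin, and the bound obtained by testing the equation against `(1 - |x|²)²`. -/
structure IsMeanFieldProfile (l : ℝ) (w : ℝ → ℝ) : Prop where
  pos : 0 < l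
  continuous : Continuous w
  antitoneOn : AntitoneOn w (Set.Icc 0 1)
  apply_one : w 1 = 0
  pohozaev :
    (radialMoment 3 l w 1 - radialMoment 5 l w 1) ^ 2 + 8 * l = 32 * radialMoment 3 l w 1
  apply_zero_le :
    4 * w 0 ≤ ∫ r in (0 : ℝ)..1, r ^ 2 * (l * Real.exp (w r)) * Real.negMulLog r
  mul_radialMoment_le : ∀ δ r, 0 < δ → δ ≤ r → r ≤ 1 / 8 →
    (-2 * Real.log r - Real.log 8 - 1) * radialMoment 3 l w δ ≤ 8 * w r
  integral_le : 192 * ∫ r in (0 : ℝ)..1, r ^ 3 * w r ≤ radialMoment 3 l w 1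

namespace IsMeanFieldProfile

lemma apply_nonneg (h : IsMeanFieldProfile l w) (hr : r ∈ Set.Icc (0 : ℝ) 1) : 0 ≤ w r :=
  h.apply_one ▸ h.antitoneOn hr (Set.right_mem_Icc.2 zero_le_one) hr.2

lemma continuous_density (h : IsMeanFieldProfile l w) : Continuous fun r => l * Real.exp (w r) :=
  continuous_const.mul (Real.continuous_exp.comp h.continuous)

lemma intervalIntegrable_pow_mul (h : IsMeanFieldProfile l w) (n : ℕ) (a b : ℝ) :
    IntervalIntegrable (fun r => r ^ n * (l * Real.exp (w r))) volume a b :=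
  ((continuous_pow n).mul h.continuous_density).intervalIntegrable a b

lemma radialMoment_sub (h : IsMeanFieldProfile l w) (n : ℕ) (a b : ℝ) :
    radialMoment n l w b - radialMoment n l w a = ∫ r in a..b, r ^ n * (l * Real.exp (w r)) :=
  intervalIntegral.integral_interval_sub_left (h.intervalIntegrable_pow_mul n 0 b)
    (h.intervalIntegrable_pow_mul n 0 a)

lemma radialMoment_mono (h : IsMeanFieldProfile l w) (n : ℕ) {a b : ℝ} (ha : 0 ≤ a)
    (hab : a ≤ b) : radialMoment n l w a ≤ radialMoment n l w b := by
  have hl := h.pos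
  rw [← sub_nonneg, h.radialMoment_sub]
  refine intervalIntegral.integral_nonneg hab fun r hr => ?_
  have := ha.trans hr.1
  positivity

lemma radialMoment_nonneg (h : IsMeanFieldProfile l w) (n : ℕ) (hδ : 0 ≤ δ) :
    0 ≤ radialMoment n l w δ := by
  simpa [radialMoment] using h.radialMoment_mono n le_rfl hδ

/-- Chebyshev's inequality against the weight `r³`, for which `r²` has mean `2/3`. -/
lemma radialMoment_five_le (h : IsMeanFieldProfile l w) :
    3 * radialMoment 5 l w 1 ≤ 2 * radialMoment 3 l w 1 := by
  have hl := h.pos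
  set s := √(2 / 3 : ℝ)
  have hs2 : s ^ 2 = 2 / 3 := Real.sq_sqrt (by norm_num)
  have hs0 : 0 ≤ s := Real.sqrt_nonneg _
  have hs : s ∈ Set.Icc (0 : ℝ) 1 := ⟨hs0, by nlinarith⟩
  have hpoint (r : ℝ) (hr : r ∈ Set.Icc (0 : ℝ) 1) :
      r ^ 3 * (3 * r ^ 2 - 2) * (l * Real.exp (w r)) ≤
        r ^ 3 * (3 * r ^ 2 - 2) * (l * Real.exp (w s)) := by
    have hr3 : 0 ≤ r ^ 3 := pow_nonneg hr.1 3
    rcases le_total r s with hrs | hsr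
    · exact mul_le_mul_of_nonpos_left (by gcongr; exact h.antitoneOn hr hs hrs)
        (mul_nonpos_of_nonneg_of_nonpos hr3 (by nlinarith [hr.1]))
    · exact mul_le_mul_of_nonneg_left (by gcongr; exact h.antitoneOn hs hr hsr)
        (mul_nonneg hr3 (by nlinarith))
  have hF := h.continuous_density
  have hmono := intervalIntegral.integral_mono_on (μ := volume) zero_le_one
    (Continuous.intervalIntegrable (by fun_prop) 0 1)
    (Continuous.intervalIntegrable (by fun_prop) 0 1) hpoint
  have hmean : ∫ r in (0 : ℝ)..1, r ^ 3 * (3 * r ^ 2 - 2) * (l * Real.exp (w s)) = 0 := by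
    have hexpand (r : ℝ) : r ^ 3 * (3 * r ^ 2 - 2) = 3 * r ^ 5 - 2 * r ^ 3 := by ring
    simp only [hexpand]
    rw [intervalIntegral.integral_mul_const, intervalIntegral.integral_sub
      (Continuous.intervalIntegrable (by fun_prop) 0 1)
      (Continuous.intervalIntegrable (by fun_prop) 0 1), intervalIntegral.integral_const_mul,
      intervalIntegral.integral_const_mul, integral_pow, integral_pow]
    norm_num
  have hsplit : ∫ r in (0 : ℝ)..1, r ^ 3 * (3 * r ^ 2 - 2) * (l * Real.exp (w r)) =
      3 * radialMoment 5 l w 1 - 2 * radialMoment 3 l w 1 := by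
    rw [radialMoment, radialMoment, ← intervalIntegral.integral_const_mul,
      ← intervalIntegral.integral_const_mul, ← intervalIntegral.integral_sub (μ := volume)
        ((h.intervalIntegrable_pow_mul 5 0 1).const_mul 3)
        ((h.intervalIntegrable_pow_mul 3 0 1).const_mul 2)]
    exact intervalIntegral.integral_congr fun r _ => by ring
  linarith

lemma radialMoment_three_le (h : IsMeanFieldProfile l w) : radialMoment 3 l w 1 ≤ 288 := by
  nlinarith [h.pohozaev, h.pos, h.radialMoment_five_le, h.radialMoment_nonneg 3 zero_le_one]

lemma le_four_mul_radialMoment (h : IsMeanFieldProfile l w) : l ≤ 4 * radialMoment 3 l w 1 := by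
  nlinarith [h.pohozaev]

lemma integral_negMulLog_le (h : IsMeanFieldProfile l w) {a b : ℝ} (ha : 0 < a) (hab : a ≤ b) :
    ∫ r in a..b, r ^ 2 * (l * Real.exp (w r)) * Real.negMulLog r ≤
      -Real.log a * (radialMoment 3 l w b - radialMoment 3 l w a) := by
  have hl := h.pos
  rw [h.radialMoment_sub, ← intervalIntegral.integral_const_mul]
  refine intervalIntegral.integral_mono_on hab
    (Continuous.intervalIntegrable
      (((continuous_pow 2).mul h.continuous_density).mul Real.continuous_negMulLog) a b)
    ((h.intervalIntegrable_pow_mul 3 a b).const_mul _) fun r hr => ?_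
  have hr0 : 0 < r := ha.trans_le hr.1
  have hlog : -Real.log r ≤ -Real.log a := neg_le_neg (Real.log_le_log ha hr.1)
  calc r ^ 2 * (l * Real.exp (w r)) * Real.negMulLog r
      = -Real.log r * (r ^ 3 * (l * Real.exp (w r))) := by rw [Real.negMulLog]; ring
    _ ≤ -Real.log a * (r ^ 3 * (l * Real.exp (w r))) := by gcongr

lemma integral_negMulLog_zero_le (h : IsMeanFieldProfile l w) {R : ℝ} (hR : 0 < R) (hR1 : R ≤ 1) :
    ∫ r in (0 : ℝ)..R, r ^ 2 * (l * Real.exp (w r)) * Real.negMulLog r ≤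
      -Real.log R * radialMoment 3 l w R + R ^ 4 * (l * Real.exp (w 0)) / 3 := by
  have hl := h.pos
  have hpoint (r : ℝ) (hr : r ∈ Set.Icc 0 R) :
      r ^ 2 * (l * Real.exp (w r)) * Real.negMulLog r ≤
        -Real.log R * (r ^ 3 * (l * Real.exp (w r))) + R * (l * Real.exp (w 0)) * r ^ 2 := by
    rcases hr.1.eq_or_lt with rfl | hr0
    · simp
    have hlog : -Real.log r ≤ -Real.log R + R / r := by
      have := (Real.log_le_self (div_pos hR hr0).le)
      rw [Real.log_div hR.ne' hr0.ne'] at this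
      linarith
    have hw : w r ≤ w 0 :=
      h.antitoneOn (Set.left_mem_Icc.2 zero_le_one) ⟨hr0.le, hr.2.trans hR1⟩ hr0.le
    calc r ^ 2 * (l * Real.exp (w r)) * Real.negMulLog r
        = r ^ 3 * (l * Real.exp (w r)) * -Real.log r := by rw [Real.negMulLog]; ring
      _ ≤ r ^ 3 * (l * Real.exp (w r)) * (-Real.log R + R / r) := by gcongr
      _ = -Real.log R * (r ^ 3 * (l * Real.exp (w r))) + R * (l * Real.exp (w r)) * r ^ 2 := by
          field_simp
      _ ≤ _ := by gcongr
  have hF := h.continuous_density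
  refine (intervalIntegral.integral_mono_on hR.le (Continuous.intervalIntegrable
    (((continuous_pow 2).mul hF).mul Real.continuous_negMulLog) 0 R)
    (Continuous.intervalIntegrable (by fun_prop) 0 R) hpoint).trans_eq ?_
  rw [intervalIntegral.integral_add (Continuous.intervalIntegrable (by fun_prop) 0 R)
    (Continuous.intervalIntegrable (by fun_prop) 0 R), intervalIntegral.integral_const_mul,
    intervalIntegral.integral_const_mul, integral_pow, radialMoment]
  norm_num
  ring

/-- The threshold `exp (-w 0 / 4)` is the width of a bubble of height `w 0`. -/
lemma sixteen_sub_radialMoment_mul_le (h : IsMeanFieldProfile l w)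
    (hδ : Real.exp (-(w 0 / 4)) ≤ δ) (hδ1 : δ ≤ 1) :
    (16 - radialMoment 3 l w δ) * w 0 ≤ 1536 - 1152 * Real.log δ := by
  set R := Real.exp (-(w 0 / 4)) with hRdef
  have hR : 0 < R := Real.exp_pos _
  have hlogR : -Real.log R = w 0 / 4 := by rw [hRdef, Real.log_exp, neg_neg]
  have hbubble : R ^ 4 * (l * Real.exp (w 0)) = l := by
    rw [hRdef, ← Real.exp_nat_mul, mul_left_comm, ← Real.exp_add]
    convert mul_one l
    rw [Real.exp_eq_one_iff]
    push_cast
    ring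
  have hint (a b : ℝ) : IntervalIntegrable
      (fun r => r ^ 2 * (l * Real.exp (w r)) * Real.negMulLog r) volume a b :=
    Continuous.intervalIntegrable
      (((continuous_pow 2).mul h.continuous_density).mul Real.continuous_negMulLog) a b
  have hcore := h.integral_negMulLog_zero_le hR (hδ.trans hδ1)
  have hmid := h.integral_negMulLog_le hR hδ
  have houter := h.integral_negMulLog_le (hR.trans_le hδ) hδ1
  have hsum := h.apply_zero_le
  rw [← intervalIntegral.integral_add_adjacent_intervals (hint 0 δ) (hint δ 1),
    ← intervalIntegral.integral_add_adjacent_intervals (hint 0 R) (hint R δ)] at hsum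
  rw [hlogR, hbubble] at hcore
  rw [hlogR] at hmid
  have hlogδ : 0 ≤ -Real.log δ := by
    simpa using Real.log_nonpos (hR.trans_le hδ).le hδ1
  have htail : -Real.log δ * (radialMoment 3 l w 1 - radialMoment 3 l w δ) ≤
      -Real.log δ * 288 := by
    gcongr
    linarith [h.radialMoment_three_le, h.radialMoment_nonneg 3 (hR.trans_le hδ).le]
  linarith [h.le_four_mul_radialMoment, h.radialMoment_three_le]

lemma le_apply_of_sixteen_sub_radialMoment_le (h : IsMeanFieldProfile l w) (hδ : 0 < δ)
    (hmass : (16 - radialMoment 3 l w δ) * -Real.log δ ≤ 4) (hδr : δ ≤ r) (hr : r ≤ 1 / 8) :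
    -4 * Real.log r - (2 * Real.log 8 + 3) ≤ w r := by
  have hr0 := hδ.trans_le hδr
  have hlog8 : 1 ≤ Real.log 8 := by
    rw [Real.le_log_iff_exp_le (by norm_num)]
    linarith [Real.exp_one_lt_d9]
  have hlogr : Real.log 8 ≤ -Real.log r := by
    rw [← Real.log_inv]
    exact Real.log_le_log (by norm_num) ((le_inv_comm₀ (by norm_num) hr0).2 (by linarith))
  have hlogδ : -Real.log r ≤ -Real.log δ := neg_le_neg (Real.log_le_log hδ hδr)
  have hgreen := h.mul_radialMoment_le δ r hδ hδr hr
  rcases le_total 16 (radialMoment 3 l w δ) with hM | hM <;> nlinarith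

lemma mul_neg_log_le (h : IsMeanFieldProfile l w) (hδ : 0 < δ) (hδ8 : δ ≤ 1 / 8)
    (hmass : (16 - radialMoment 3 l w δ) * -Real.log δ ≤ 4) :
    l * (-Real.log 8 - Real.log δ) ≤ 288 * Real.exp (2 * Real.log 8 + 3) := by
  have hl := h.pos
  set c := 2 * Real.log 8 + 3
  have hpoint (r : ℝ) (hr : r ∈ Set.Icc δ (1 / 8)) :
      l * Real.exp (-c) * r⁻¹ ≤ r ^ 3 * (l * Real.exp (w r)) := by
    have hr0 := hδ.trans_le hr.1
    have hexp : Real.exp (-c) * (r ^ 4)⁻¹ ≤ Real.exp (w r) := by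
      rw [← Real.exp_log (pow_pos hr0 4), ← Real.exp_neg, ← Real.exp_add, Real.log_pow]
      gcongr
      push_cast
      linarith [h.le_apply_of_sixteen_sub_radialMoment_le hδ hmass hr.1 hr.2]
    calc l * Real.exp (-c) * r⁻¹ = r ^ 3 * (l * (Real.exp (-c) * (r ^ 4)⁻¹)) := by field_simp
      _ ≤ _ := by gcongr
  have hne : (0 : ℝ) ∉ Set.uIcc δ (1 / 8) := by
    rw [Set.uIcc_of_le hδ8]
    exact fun h0 => hδ.not_ge h0.1
  have hmono := intervalIntegral.integral_mono_on hδ8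
    ((intervalIntegrable_inv_iff.2 (.inr hne)).const_mul _)
    (h.intervalIntegrable_pow_mul 3 δ (1 / 8)) hpoint
  rw [← h.radialMoment_sub, intervalIntegral.integral_const_mul,
    integral_inv_of_pos hδ (by norm_num), Real.log_div (by norm_num) hδ.ne', one_div,
    Real.log_inv] at hmono
  have hM : radialMoment 3 l w 8⁻¹ - radialMoment 3 l w δ ≤ 288 := by
    linarith [h.radialMoment_mono 3 (a := 8⁻¹) (b := 1) (by norm_num) (by norm_num),
      h.radialMoment_three_le, h.radialMoment_nonneg 3 hδ.le]
  have hexp : Real.exp (-c) * Real.exp c = 1 := by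
    rw [← Real.exp_add, neg_add_cancel, Real.exp_zero]
  calc l * (-Real.log 8 - Real.log δ)
      = l * Real.exp (-c) * (-Real.log 8 - Real.log δ) * Real.exp c := by
        linear_combination (-(l * (-Real.log 8 - Real.log δ))) * hexp
    _ ≤ 288 * Real.exp c := by
        gcongr
        exact hmono.trans hM

lemma apply_le_six_div (h : IsMeanFieldProfile l w) (hδ : 0 < δ) (hδ1 : δ ≤ 1) :
    w δ ≤ 6 / δ ^ 4 := by
  have hδmem : δ ∈ Set.Icc (0 : ℝ) 1 := ⟨hδ.le, hδ1⟩
  have hint (a b : ℝ) : IntervalIntegrable (fun r => r ^ 3 * w r) volume a b :=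
    ((continuous_pow 3).mul h.continuous).intervalIntegrable a b
  have hinner : δ ^ 4 / 4 * w δ ≤ ∫ r in (0 : ℝ)..δ, r ^ 3 * w r := by
    calc δ ^ 4 / 4 * w δ = ∫ r in (0 : ℝ)..δ, r ^ 3 * w δ := by
          rw [intervalIntegral.integral_mul_const, integral_pow]; norm_num
      _ ≤ _ := by
          refine intervalIntegral.integral_mono_on hδ.le
            (Continuous.intervalIntegrable (by fun_prop) 0 δ) (hint 0 δ) fun r hr => ?_
          exact mul_le_mul_of_nonneg_left
            (h.antitoneOn ⟨hr.1, hr.2.trans hδ1⟩ hδmem hr.2) (pow_nonneg hr.1 3)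
  have houter : 0 ≤ ∫ r in δ..1, r ^ 3 * w r :=
    intervalIntegral.integral_nonneg hδ1 fun r hr => by
      have hr0 := hδ.le.trans hr.1
      exact mul_nonneg (pow_nonneg hr0 3) (h.apply_nonneg ⟨hr0, hr.2⟩)
  have hsum := h.integral_le
  rw [← intervalIntegral.integral_add_adjacent_intervals (hint 0 δ) (hint δ 1)] at hsum
  rw [le_div_iff₀ (by positivity)]
  linarith [h.radialMoment_three_le]

lemma radialMoment_five_le_of_pos (h : IsMeanFieldProfile l w) (hδ : 0 < δ) (hδ1 : δ ≤ 1) :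
    radialMoment 5 l w 1 ≤ 288 * δ ^ 2 + l * Real.exp (6 / δ ^ 4) := by
  have hl := h.pos
  have hinner : radialMoment 5 l w δ ≤ δ ^ 2 * radialMoment 3 l w δ := by
    rw [radialMoment, radialMoment, ← intervalIntegral.integral_const_mul]
    refine intervalIntegral.integral_mono_on hδ.le (h.intervalIntegrable_pow_mul 5 0 δ)
      ((h.intervalIntegrable_pow_mul 3 0 δ).const_mul _) fun r hr => ?_
    have hr0 := hr.1
    calc r ^ 5 * (l * Real.exp (w r)) = r ^ 2 * (r ^ 3 * (l * Real.exp (w r))) := by ring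
      _ ≤ δ ^ 2 * (r ^ 3 * (l * Real.exp (w r))) := by gcongr; exact hr.2
  have houter : ∫ r in δ..1, r ^ 5 * (l * Real.exp (w r)) ≤ l * Real.exp (6 / δ ^ 4) := by
    have hpoint (r : ℝ) (hr : r ∈ Set.Icc δ 1) :
        r ^ 5 * (l * Real.exp (w r)) ≤ l * Real.exp (6 / δ ^ 4) := by
      have hr0 := hδ.le.trans hr.1
      have hw : w r ≤ 6 / δ ^ 4 := (h.antitoneOn ⟨hδ.le, hδ1⟩ ⟨hr0, hr.2⟩ hr.1).trans
        (h.apply_le_six_div hδ hδ1)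
      calc r ^ 5 * (l * Real.exp (w r)) ≤ 1 * (l * Real.exp (6 / δ ^ 4)) := by
            gcongr
            exact pow_le_one₀ hr0 hr.2
        _ = _ := one_mul _
    refine (intervalIntegral.integral_mono_on hδ1 (h.intervalIntegrable_pow_mul 5 δ 1)
      intervalIntegrable_const hpoint).trans ?_
    rw [intervalIntegral.integral_const, smul_eq_mul]
    exact mul_le_of_le_one_left (by positivity) (by linarith)
  rw [← h.radialMoment_sub] at houter
  have hM : δ ^ 2 * radialMoment 3 l w δ ≤ δ ^ 2 * 288 := by
    gcongr
    exact (h.radialMoment_mono 3 hδ.le hδ1).trans h.radialMoment_three_le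
  linarith

lemma abs_radialMoment_sub_le (h : IsMeanFieldProfile l w) (hM : 8 ≤ radialMoment 3 l w 1) :
    |radialMoment 3 l w 1 - 32| ≤ 3 * radialMoment 5 l w 1 + l := by
  have hl := h.pos
  have hpoh := h.pohozaev
  have hY := h.radialMoment_five_le
  have hY0 := h.radialMoment_nonneg 5 zero_le_one
  have hM0 : 0 < radialMoment 3 l w 1 := by linarith
  rw [abs_le]
  constructor <;> refine le_of_mul_le_mul_left ?_ hM0 <;> nlinarith

end IsMeanFieldProfile

end MeanFieldProfile

section ConcentrationLimit

variable {ι : Type*} {L : Filter ι} {l : ι → ℝ} {w : ι → ℝ → ℝ}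

lemma eventually_sixteen_sub_radialMoment_le (h : ∀ᶠ k in L, IsMeanFieldProfile (l k) (w k))
    (hw : Tendsto (fun k => w k 0) L atTop) {δ ε : ℝ} (hδ : 0 < δ) (hδ1 : δ ≤ 1) (hε : 0 < ε) :
    ∀ᶠ k in L, 16 - radialMoment 3 (l k) (w k) δ ≤ ε := by
  have hcore : Tendsto (fun k => Real.exp (-(w k 0 / 4))) L (nhds 0) :=
    Real.tendsto_exp_neg_atTop_nhds_zero.comp (hw.atTop_div_const four_pos)
  filter_upwards [h, hcore.eventually (ge_mem_nhds hδ), hw.eventually_gt_atTop 0,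
    hw.eventually_ge_atTop ((1536 - 1152 * Real.log δ) / ε)] with k hk hkδ hk0 hkε
  rw [div_le_iff₀ hε] at hkε
  refine le_of_mul_le_mul_right ?_ hk0
  linarith [hk.sixteen_sub_radialMoment_mul_le hkδ hδ1]

lemma tendsto_zero_of_isMeanFieldProfile (h : ∀ᶠ k in L, IsMeanFieldProfile (l k) (w k))
    (hw : Tendsto (fun k => w k 0) L atTop) : Tendsto l L (nhds 0) := by
  set C := 288 * Real.exp (2 * Real.log 8 + 3)
  refine Metric.tendsto_nhds.2 fun ε hε => ?_
  -- `δ` is chosen so that `-log 8 - log δ` exceeds `C / ε`.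
  set δ := Real.exp (-(Real.log 8 + (C / ε + 1)))
  have hδ : 0 < δ := Real.exp_pos _
  have hlogδ : Real.log δ = -(Real.log 8 + (C / ε + 1)) := Real.log_exp _
  have hpos : 0 < C / ε + 1 := by positivity
  have hlog8 : 0 < Real.log 8 := Real.log_pos (by norm_num)
  have hδ8 : δ ≤ 1 / 8 := by
    rw [← Real.log_le_log_iff hδ (by norm_num), hlogδ, one_div, Real.log_inv]
    linarith
  have hlog0 : 0 < -Real.log δ := by linarith
  filter_upwards [h, eventually_sixteen_sub_radialMoment_le h hw hδ (hδ8.trans (by norm_num))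
    (div_pos four_pos hlog0)] with k hk hmass
  have hle := hk.mul_neg_log_le hδ hδ8 ((le_div_iff₀ hlog0).1 hmass)
  rw [Real.dist_0_eq_abs, abs_of_pos hk.pos]
  rw [hlogδ, show -Real.log 8 - -(Real.log 8 + (C / ε + 1)) = C / ε + 1 by ring] at hle
  have hCε : C = C / ε * ε := (div_mul_cancel₀ C hε.ne').symm
  by_contra! hlε
  nlinarith

lemma tendsto_radialMoment_five (h : ∀ᶠ k in L, IsMeanFieldProfile (l k) (w k))
    (hw : Tendsto (fun k => w k 0) L atTop) :
    Tendsto (fun k => radialMoment 5 (l k) (w k) 1) L (nhds 0) := by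
  refine Metric.tendsto_nhds.2 fun ε hε => ?_
  obtain ⟨δ, ⟨hδ, hδ1⟩, hδε⟩ : ∃ δ ∈ Set.Ioc (0 : ℝ) 1, 288 * δ ^ 2 < ε := by
    have hlim : Tendsto (fun δ : ℝ => 288 * δ ^ 2) (nhdsWithin 0 (Set.Ioi 0)) (nhds 0) :=
      tendsto_nhdsWithin_of_tendsto_nhds (Continuous.tendsto' (by fun_prop) _ _ (by norm_num))
    exact (Filter.Eventually.and (Ioc_mem_nhdsGT one_pos)
      (hlim.eventually (gt_mem_nhds hε))).exists
  have hbound : Tendsto (fun k => 288 * δ ^ 2 + l k * Real.exp (6 / δ ^ 4)) L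
      (nhds (288 * δ ^ 2)) := by
    simpa using ((tendsto_zero_of_isMeanFieldProfile h hw).mul_const
      (Real.exp (6 / δ ^ 4))).const_add (288 * δ ^ 2)
  filter_upwards [h, hbound.eventually (gt_mem_nhds hδε)] with k hk hkε
  rw [Real.dist_0_eq_abs, abs_of_nonneg (hk.radialMoment_nonneg 5 zero_le_one)]
  exact (hk.radialMoment_five_le_of_pos hδ hδ1).trans_lt hkε

theorem tendsto_radialMoment_three (h : ∀ᶠ k in L, IsMeanFieldProfile (l k) (w k))
    (hw : Tendsto (fun k => w k 0) L atTop) :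
    Tendsto (fun k => radialMoment 3 (l k) (w k) 1) L (nhds 32) := by
  rw [tendsto_iff_dist_tendsto_zero]
  refine squeeze_zero' (.of_forall fun _ => dist_nonneg) ?_
    (g := fun k => 3 * radialMoment 5 (l k) (w k) 1 + l k) ?_
  · filter_upwards [h, eventually_sixteen_sub_radialMoment_le h hw one_pos le_rfl
      (show (0 : ℝ) < 8 by norm_num)] with k hk hmass
    exact hk.abs_radialMoment_sub_le (by linarith)
  · simpa using ((tendsto_radialMoment_five h hw).const_mul 3).add
      (tendsto_zero_of_isMeanFieldProfile h hw)

end ConcentrationLimit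

section KernelBounds

variable {E : Type*} [SeminormedAddCommGroup E] {x y : E}

lemma boggioKernel_zero_le (hy : ‖y‖ ≤ 1) : boggioKernel 0 y ≤ -2 * Real.log ‖y‖ := by
  rcases (norm_nonneg y).eq_or_lt with hy0 | hy0
  · simp [boggioKernel, ← hy0]
  have hs : 0 ≤ (1 - ‖y‖ ^ 2) / ‖y‖ ^ 2 :=
    div_nonneg (one_sub_norm_sq_nonneg hy) (sq_nonneg _)
  have hsum : 1 + (1 - ‖y‖ ^ 2) / ‖y‖ ^ 2 = (‖y‖ ^ 2)⁻¹ := by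
    field_simp
    ring
  calc boggioKernel 0 y = boggioProfile ((1 - ‖y‖ ^ 2) / ‖y‖ ^ 2) := by simp [boggioKernel]
    _ ≤ Real.log (1 + (1 - ‖y‖ ^ 2) / ‖y‖ ^ 2) := boggioProfile_le_log hs
    _ = -2 * Real.log ‖y‖ := by rw [hsum, Real.log_inv, Real.log_pow]; push_cast; ring

lemma le_boggioKernel (hx : ‖x‖ ≤ 1 / 8) (hyx : ‖y‖ < ‖x‖) :
    -2 * Real.log ‖x‖ - Real.log 8 - 1 ≤ boggioKernel x y := by
  have hx0 : 0 < ‖x‖ := (norm_nonneg y).trans_lt hyx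
  have hdist0 : 0 < ‖x - y‖ := (sub_pos.2 hyx).trans_le (norm_sub_norm_le x y)
  have hdist : ‖x - y‖ ≤ 2 * ‖x‖ := (norm_sub_le x y).trans (by linarith)
  set s := (1 - ‖x‖ ^ 2) * (1 - ‖y‖ ^ 2) / ‖x - y‖ ^ 2 with hs
  have hs8 : (8 * ‖x‖ ^ 2)⁻¹ ≤ s := by
    have hhalf : 1 / 2 ≤ (1 - ‖x‖ ^ 2) * (1 - ‖y‖ ^ 2) := by
      have hx' : 3 / 4 ≤ 1 - ‖x‖ ^ 2 := by nlinarith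
      have hy' : 3 / 4 ≤ 1 - ‖y‖ ^ 2 := by nlinarith [norm_nonneg y]
      nlinarith
    calc (8 * ‖x‖ ^ 2)⁻¹ = 1 / 2 / (2 * ‖x‖) ^ 2 := by field_simp; norm_num
      _ ≤ s := by rw [hs]; gcongr
  have hs0 : 0 < s := lt_of_lt_of_le (by positivity) hs8
  have hlog : -2 * Real.log ‖x‖ - Real.log 8 ≤ Real.log (1 + s) := by
    calc -2 * Real.log ‖x‖ - Real.log 8 = Real.log (8 * ‖x‖ ^ 2)⁻¹ := by
          rw [Real.log_inv, Real.log_mul (by norm_num) (by positivity), Real.log_pow]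
          push_cast
          ring
      _ ≤ Real.log (1 + s) := Real.log_le_log (by positivity) (by linarith)
  have hfrac : s / (1 + s) ≤ 1 := (div_le_one (by positivity)).2 (by linarith)
  rw [boggioKernel, ← hs, boggioProfile]
  linarith

end KernelBounds

section MeanFieldSolutions

variable {ρ δ r : ℝ} {u : ℝ⁴ → ℝ} {x : ℝ⁴}

lemma lap_one_sub_norm_sq_sq (y : ℝ⁴) :
    lap (fun z => (1 - ‖z‖ ^ 2) ^ 2) y = 24 * ‖y‖ ^ 2 - 16 := by
  have hχ (s : ℝ) : HasDerivAt (fun s : ℝ => (1 - s) ^ 2) (-2 * (1 - s)) s :=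
    (((hasDerivAt_id s).const_sub 1).pow 2).congr_deriv (by simp)
  have hχ' (s : ℝ) : HasDerivAt (fun s : ℝ => -2 * (1 - s)) 2 s :=
    (((hasDerivAt_id s).const_sub 1).const_mul (-2)).congr_deriv (by norm_num)
  rw [lap_comp_norm_sq (.of_forall hχ) (hχ' _)]
  ring

lemma lap_lap_one_sub_norm_sq_sq (y : ℝ⁴) : lap (lap fun z => (1 - ‖z‖ ^ 2) ^ 2) y = 192 := by
  have hχ (s : ℝ) : HasDerivAt (fun s : ℝ => 24 * s - 16) 24 s := by
    simpa using ((hasDerivAt_id s).const_mul 24).sub_const 16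
  rw [funext lap_one_sub_norm_sq_sq, lap_comp_norm_sq (.of_forall hχ) (hasDerivAt_const _ _)]
  norm_num

lemma hasZeroDirichletData_one_sub_norm_sq_sq :
    HasZeroDirichletData 𝔻 fun z => (1 - ‖z‖ ^ 2) ^ 2 := by
  intro y hy
  rw [frontier_closedBall _ one_ne_zero, mem_sphere_zero_iff_norm] at hy
  refine ⟨by simp [hy], ?_⟩
  have h := ((hasStrictFDerivAt_norm_sq y).hasFDerivAt.const_sub 1).pow 2
  rw [h.hasFDerivWithinAt.fderivWithin (uniqueDiffOn_closedBall_zero_one y (by simp [hy]))]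
  simp [hy]

lemma integral_one_sub_norm_sq_sq_mul_lap_lap (hu : ContDiffOn ℝ 4 u 𝔻)
    (hu0 : HasZeroDirichletData 𝔻 u) :
    ∫ y in 𝔹, (1 - ‖y‖ ^ 2) ^ 2 * lap (lap u) y = 192 * ∫ y in 𝔹, u y := by
  have hg : ContDiff ℝ 4 fun z : ℝ⁴ => (1 - ‖z‖ ^ 2) ^ 2 :=
    (contDiff_const.sub (contDiff_norm_sq ℝ)).pow 2
  have h := integral_mul_lap_lap_comm (isCompact_closedBall 0 1) (convex_closedBall 0 1)
    (by simp [interior_closedBall]) hu hg.contDiffOn hu0 hasZeroDirichletData_one_sub_norm_sq_sq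
  simp only [lap_lap_one_sub_norm_sq_sq, interior_closedBall (0 : ℝ⁴) one_ne_zero] at h
  rw [h, integral_mul_const, mul_comm]

/-- The constant `ρ / ∫ e^u` in front of `e^u` in the mean field equation. -/
def meanFieldFactor (ρ : ℝ) (u : ℝ⁴ → ℝ) : ℝ :=
  ρ / ∫ y in 𝔹, Real.exp (u y)

namespace IsMFSolution

lemma hasZeroDirichletData (hu : IsMFSolution ρ u) : HasZeroDirichletData 𝔻 u := fun x hx =>
  hu.2.2 x (by simpa [frontier_closedBall (0 : ℝ⁴) one_ne_zero] using hx)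

lemma lap_lap_eq (hu : IsMFSolution ρ u) (hx : x ∈ 𝔹) :
    lap (lap u) x = meanFieldFactor ρ u * Real.exp (u x) := by
  rw [hu.2.1 x hx, meanFieldFactor, div_mul_eq_mul_div]

lemma indicator (hu : IsMFSolution ρ u) : IsMFSolution ρ ((𝔻).indicator u) := by
  have heq : Set.EqOn ((𝔻).indicator u) u 𝔻 := fun x hx => Set.indicator_of_mem hx u
  refine ⟨hu.1.congr heq, fun x hx => ?_, fun x hx => ?_⟩
  · have hloc : (𝔻).indicator u =ᶠ[nhds x] u :=
      heq.eventuallyEq_of_mem (closedBall_mem_nhds_of_mem hx)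
    have hlap : lap ((𝔻).indicator u) =ᶠ[nhds x] lap u :=
      hloc.eventuallyEq_nhds.mono fun y hy => lap_congr hy
    have hint : ∫ y in 𝔹, Real.exp ((𝔻).indicator u y) = ∫ y in 𝔹, Real.exp (u y) :=
      setIntegral_congr_fun measurableSet_ball fun y hy =>
        congrArg Real.exp (heq (ball_subset_closedBall hy))
    rw [lap_congr hlap, hint, heq (ball_subset_closedBall hx), hu.2.1 x hx]
  · have hx𝔻 : x ∈ 𝔻 := by simp [hx]
    rw [heq hx𝔻, fderivWithin_congr heq (heq hx𝔻)]
    exact hu.2.2 x hx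

lemma continuous_indicator (hu : IsMFSolution ρ u) : Continuous ((𝔻).indicator u) := by
  obtain ⟨C, hC⟩ := exists_lipschitzWith_indicator_of_contDiffOn (isCompact_closedBall 0 1)
    (convex_closedBall 0 1) (by simp [interior_closedBall]) (hu.1.of_le (by norm_num))
    fun x hx => (hu.hasZeroDirichletData x hx).1
  exact hC.continuous

lemma integrableOn_exp (hu : IsMFSolution ρ u) : IntegrableOn (fun y => Real.exp (u y)) 𝔹 :=
  interior_closedBall (0 : ℝ⁴) one_ne_zero ▸
    integrableOn_interior (isCompact_closedBall 0 1) hu.1.continuousOn.rexp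

lemma integral_exp_pos (hu : IsMFSolution ρ u) : 0 < ∫ y in 𝔹, Real.exp (u y) := by
  have : NeZero (volume.restrict 𝔹) :=
    ⟨Measure.restrict_eq_zero.not.2 (measure_ball_pos volume 0 one_pos).ne'⟩
  exact MeasureTheory.integral_exp_pos hu.integrableOn_exp

lemma integral_boggioKernel (hu : IsMFSolution ρ u) (hx : x ∈ 𝔹) :
    ∫ y in 𝔹, boggioKernel x y * (meanFieldFactor ρ u * Real.exp (u y)) =
      16 * Real.pi ^ 2 * u x := by
  rw [← green_representation hu.1 hu.hasZeroDirichletData hx]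
  exact setIntegral_congr_fun measurableSet_ball fun y hy =>
    congrArg (boggioKernel x y * ·) (hu.lap_lap_eq hy).symm

lemma sSup_image_nonpos (hu : IsMFSolution ρ u) (hρ : ρ ≤ 0) : sSup (u '' 𝔻) ≤ 0 := by
  refine Real.sSup_nonpos ?_
  rintro _ ⟨x, hx, rfl⟩
  rcases (mem_closedBall_zero_iff.1 hx).eq_or_lt with hx1 | hx1
  · exact (hu.2.2 x hx1).1.le
  have hfactor : meanFieldFactor ρ u ≤ 0 := div_nonpos_of_nonpos_of_nonneg hρ hu.integral_exp_pos.le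
  have hgreen := hu.integral_boggioKernel (mem_ball_zero_iff.2 hx1)
  have hnonpos := setIntegral_nonpos (μ := volume) (s := 𝔹)
    (f := fun y => boggioKernel x y * (meanFieldFactor ρ u * Real.exp (u y)))
    measurableSet_ball fun y hy => mul_nonpos_of_nonneg_of_nonpos
      (boggioKernel_nonneg hx1.le (mem_ball_zero_iff.1 hy).le)
      (mul_nonpos_of_nonpos_of_nonneg hfactor (Real.exp_pos _).le)
  rw [hgreen] at hnonpos
  exact nonpos_of_mul_nonpos_right hnonpos (by positivity)

lemma meanFieldFactor_pos (hu : IsMFSolution ρ u) (hρ : 0 < ρ) : 0 < meanFieldFactor ρ u :=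
  div_pos hρ hu.integral_exp_pos

lemma apply_nonneg (hu : IsMFSolution ρ u) (hρ : 0 < ρ) (hx : x ∈ 𝔻) : 0 ≤ u x := by
  have hl := hu.meanFieldFactor_pos hρ
  rcases (mem_closedBall_zero_iff.1 hx).eq_or_lt with hx1 | hx1
  · exact (hu.2.2 x hx1).1.ge
  refine nonneg_of_mul_nonneg_right (a := 16 * Real.pi ^ 2) ?_ (by positivity)
  rw [← hu.integral_boggioKernel (mem_ball_zero_iff.2 hx1)]
  exact setIntegral_nonneg measurableSet_ball fun y hy =>
    mul_nonneg (boggioKernel_nonneg hx1.le (mem_ball_zero_iff.1 hy).le) (by positivity)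

lemma le_of_norm_le (hu : IsMFSolution ρ u) (hρ : 0 < ρ) (hc : Continuous u) {x y : ℝ⁴}
    (hy : y ∈ 𝔻) (hxy : ‖x‖ ≤ ‖y‖) : u y ≤ u x := by
  have hl := hu.meanFieldFactor_pos hρ
  rcases (mem_closedBall_zero_iff.1 hy).eq_or_lt with hy1 | hy1
  · rw [(hu.2.2 y hy1).1]
    exact hu.apply_nonneg hρ (mem_closedBall_zero_iff.2 (hxy.trans hy1.le))
  have hgreen : IsGreenSolution (fun t => meanFieldFactor ρ u * Real.exp t) u :=
    ⟨hc, fun x hx => hu.integral_boggioKernel hx⟩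
  exact hgreen.le_of_norm_le (contDiff_const.mul Real.contDiff_exp).locallyLipschitz
    (Real.exp_monotone.const_mul hl.le) (fun t => by positivity) (mem_ball_zero_iff.2 hy1) hxy

lemma sSup_image_eq (hu : IsMFSolution ρ u) (hρ : 0 < ρ) (hc : Continuous u) :
    sSup (u '' 𝔻) = profile u 0 := by
  have h0 : profile u 0 = u 0 := by rw [profile, zero_smul]
  refine IsGreatest.csSup_eq ⟨⟨0, by simp, h0.symm⟩, ?_⟩
  rintro _ ⟨x, hx, rfl⟩
  exact h0 ▸ hu.le_of_norm_le hρ hc hx (by simp)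

lemma isRadialOnBall (hu : IsMFSolution ρ u) (hρ : 0 < ρ) (hc : Continuous u) :
    IsRadialOnBall u := by
  intro x hx
  have hnorm : ‖‖x‖ • EuclideanSpace.single (0 : Fin 4) (1 : ℝ)‖ = ‖x‖ := by
    rw [norm_smul_single, abs_norm]
  have hx𝔻 := ball_subset_closedBall hx
  refine le_antisymm (hu.le_of_norm_le hρ hc hx𝔻 hnorm.le)
    (hu.le_of_norm_le hρ hc ?_ hnorm.ge)
  rwa [mem_closedBall_zero_iff, hnorm, ← mem_closedBall_zero_iff]

lemma integrableOn_density (hu : IsMFSolution ρ u) :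
    IntegrableOn (fun y => meanFieldFactor ρ u * Real.exp (u y)) 𝔹 :=
  Integrable.const_mul hu.integrableOn_exp _

lemma setIntegral_density (hu : IsMFSolution ρ u) :
    ∫ y in 𝔹, meanFieldFactor ρ u * Real.exp (u y) = ρ := by
  rw [integral_const_mul, meanFieldFactor, div_mul_cancel₀ _ hu.integral_exp_pos.ne']

lemma radialMoment_eq (hu : IsMFSolution ρ u) (hrad : IsRadialOnBall u) :
    2 * Real.pi ^ 2 * radialMoment 3 (meanFieldFactor ρ u) (profile u) 1 = ρ := by
  have hexp : IsRadialOnBall fun y => meanFieldFactor ρ u * Real.exp (u y) := fun x hx =>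
    congrArg (meanFieldFactor ρ u * Real.exp ·) (hrad x hx)
  exact (setIntegral_ball_of_isRadialOnBall hexp).symm.trans hu.setIntegral_density

lemma antitoneOn_profile (hu : IsMFSolution ρ u) (hρ : 0 < ρ) (hc : Continuous u) :
    AntitoneOn (profile u) (Set.Icc 0 1) := by
  intro r hr s hs hrs
  refine hu.le_of_norm_le hρ hc ?_ ?_
  · simpa [norm_smul_single, abs_of_nonneg hs.1] using hs.2
  · simpa [norm_smul_single, abs_of_nonneg hs.1, abs_of_nonneg hr.1] using hrs

lemma pohozaev_profile (hu : IsMFSolution ρ u) (hrad : IsRadialOnBall u) :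
    (radialMoment 3 (meanFieldFactor ρ u) (profile u) 1
        - radialMoment 5 (meanFieldFactor ρ u) (profile u) 1) ^ 2 + 8 * meanFieldFactor ρ u =
      32 * radialMoment 3 (meanFieldFactor ρ u) (profile u) 1 := by
  set l := meanFieldFactor ρ u
  have hone : ‖(1 : ℝ) • EuclideanSpace.single (0 : Fin 4) (1 : ℝ)‖ = 1 := by simp
  obtain ⟨hbdry, hgrad⟩ := hu.2.2 _ hone
  have hF : ContinuousOn (fun r => l * Real.exp (profile u r)) (Set.Icc 0 1) :=
    continuousOn_const.mul (continuousOn_profile hu.1.continuousOn).rexp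
  have hbih := isRadialBiharmonic_profile hu.1 hrad hgrad hF fun x hx => by
    rw [hu.lap_lap_eq hx, hrad x hx]
  have h := hbih.pohozaev_identity hF fun r hr => by
    simpa only [mul_assoc] using
      (hasDerivAt_profile (hu.1.of_le (by norm_num)) hr).exp.const_mul l
  have hprofile : profile u 1 = 0 := hbdry
  simpa only [radialMoment, hprofile, Real.exp_zero, mul_one] using h

lemma continuousOn_density (hu : IsMFSolution ρ u) :
    ContinuousOn (fun y => meanFieldFactor ρ u * Real.exp (u y)) 𝔻 :=
  continuousOn_const.mul hu.1.continuousOn.rexp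

lemma apply_zero_le (hu : IsMFSolution ρ u) (hρ : 0 < ρ) (hrad : IsRadialOnBall u) :
    4 * profile u 0 ≤ ∫ r in (0 : ℝ)..1,
      r ^ 2 * (meanFieldFactor ρ u * Real.exp (profile u r)) * Real.negMulLog r := by
  have hl := hu.meanFieldFactor_pos hρ
  set l := meanFieldFactor ρ u
  set G : ℝ → ℝ := fun r => r ^ 2 * (l * Real.exp (profile u r)) * Real.negMulLog r
  set W : ℝ → ℝ := fun r => -2 * Real.log r * (l * Real.exp (profile u r))
  have hW (r : ℝ) : r ^ 3 * W r = 2 * G r := by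
    simp only [W, G, Real.negMulLog]
    ring
  have hG : ContinuousOn G (Set.Icc 0 1) :=
    ((continuousOn_id.pow 2).mul (continuousOn_const.mul
      (continuousOn_profile hu.1.continuousOn).rexp)).mul Real.continuous_negMulLog.continuousOn
  have hWint : IntegrableOn (fun y : ℝ⁴ => W ‖y‖) 𝔹 := by
    rw [integrableOn_fun_norm_addHaar volume (f := W)]
    simp only [finrank_euclideanSpace_fin, smul_eq_mul, Nat.add_one_sub_one, hW]
    exact (hG.const_mul 2).integrableOn_Icc.mono_set Set.Ioo_subset_Icc_self
  have hkernel : ∀ y ∈ 𝔹, boggioKernel 0 y * (l * Real.exp (u y)) ≤ W ‖y‖ := fun y hy => by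
    rw [hrad y hy]
    exact mul_le_mul_of_nonneg_right (boggioKernel_zero_le (mem_ball_zero_iff.1 hy).le)
      (by positivity)
  have h := setIntegral_mono_on
    (integrableOn_boggioKernel_mul hu.continuousOn_density (mem_ball_self one_pos)) hWint
    measurableSet_ball hkernel
  have h0 : profile u 0 = u 0 := by rw [profile, zero_smul]
  rw [hu.integral_boggioKernel (mem_ball_self one_pos), setIntegral_ball_comp_norm W zero_le_one,
    ← h0] at h
  simp only [hW, intervalIntegral.integral_const_mul] at h
  refine le_of_mul_le_mul_left (a := 4 * Real.pi ^ 2) ?_ (by positivity)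
  linarith

lemma mul_setIntegral_ball_le (hu : IsMFSolution ρ u) (hρ : 0 < ρ) (hδx : δ ≤ ‖x‖)
    (hx : ‖x‖ ≤ 1 / 8) :
    (-2 * Real.log ‖x‖ - Real.log 8 - 1) * ∫ y in ball 0 δ, meanFieldFactor ρ u * Real.exp (u y) ≤
      16 * Real.pi ^ 2 * u x := by
  have hl := hu.meanFieldFactor_pos hρ
  have hsub : ball (0 : ℝ⁴) δ ⊆ 𝔹 := ball_subset_ball (by linarith)
  have hx1 : ‖x‖ < 1 := by linarith
  have hint := integrableOn_boggioKernel_mul hu.continuousOn_density (mem_ball_zero_iff.2 hx1)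
  rw [← hu.integral_boggioKernel (mem_ball_zero_iff.2 hx1), ← integral_const_mul]
  calc _ ≤ ∫ y in ball 0 δ, boggioKernel x y * (meanFieldFactor ρ u * Real.exp (u y)) :=
        setIntegral_mono_on ((hu.integrableOn_density.mono_set hsub).const_mul _)
          (hint.mono_set hsub) measurableSet_ball fun y hy => mul_le_mul_of_nonneg_right
            (le_boggioKernel hx ((mem_ball_zero_iff.1 hy).trans_le hδx)) (by positivity)
    _ ≤ ∫ y in 𝔹, boggioKernel x y * (meanFieldFactor ρ u * Real.exp (u y)) :=
        setIntegral_mono_set hint ((ae_restrict_mem measurableSet_ball).mono fun y hy =>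
          mul_nonneg (boggioKernel_nonneg hx1.le (mem_ball_zero_iff.1 hy).le) (by positivity))
          hsub.eventuallyLE

lemma mul_radialMoment_le (hu : IsMFSolution ρ u) (hρ : 0 < ρ) (hrad : IsRadialOnBall u)
    (hδr : δ ≤ r) (hδ : 0 < δ) (hr : r ≤ 1 / 8) :
    (-2 * Real.log r - Real.log 8 - 1) * radialMoment 3 (meanFieldFactor ρ u) (profile u) δ ≤
      8 * profile u r := by
  have hmoment : 2 * Real.pi ^ 2 * radialMoment 3 (meanFieldFactor ρ u) (profile u) δ =
      ∫ y in ball 0 δ, meanFieldFactor ρ u * Real.exp (u y) := by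
    rw [radialMoment, ← setIntegral_ball_comp_norm _ hδ.le]
    refine setIntegral_congr_fun measurableSet_ball fun y hy => ?_
    rw [hrad y (ball_subset_ball (by linarith) hy)]
  have hnorm : ‖r • EuclideanSpace.single (0 : Fin 4) (1 : ℝ)‖ = r := by
    rw [norm_smul_single, abs_of_pos (hδ.trans_le hδr)]
  have h := hu.mul_setIntegral_ball_le hρ (hδr.trans_eq hnorm.symm) (hnorm.trans_le hr)
  rw [← hmoment, hnorm] at h
  refine le_of_mul_le_mul_left (a := 2 * Real.pi ^ 2) ?_ (by positivity)
  rw [profile]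
  linarith

lemma integral_profile_le (hu : IsMFSolution ρ u) (hρ : 0 < ρ) (hrad : IsRadialOnBall u) :
    192 * ∫ r in (0 : ℝ)..1, r ^ 3 * profile u r ≤
      radialMoment 3 (meanFieldFactor ρ u) (profile u) 1 := by
  have hl := hu.meanFieldFactor_pos hρ
  have h : 192 * ∫ y in 𝔹, u y ≤ ∫ y in 𝔹, meanFieldFactor ρ u * Real.exp (u y) := by
    rw [← integral_one_sub_norm_sq_sq_mul_lap_lap hu.1 hu.hasZeroDirichletData]
    refine integral_mono_of_nonneg ?_ hu.integrableOn_density ?_ <;>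
      filter_upwards [ae_restrict_mem measurableSet_ball] with y hy
    · rw [hu.lap_lap_eq hy, Pi.zero_apply]
      positivity
    · rw [hu.lap_lap_eq hy]
      have hy1 := (mem_ball_zero_iff.1 hy).le
      exact mul_le_of_le_one_left (by positivity)
        (pow_le_one₀ (one_sub_norm_sq_nonneg hy1) (sub_le_self _ (sq_nonneg _)))
  rw [hu.setIntegral_density, ← hu.radialMoment_eq hrad,
    setIntegral_ball_of_isRadialOnBall hrad] at h
  refine le_of_mul_le_mul_left (a := 2 * Real.pi ^ 2) ?_ (by positivity)
  linarith

theorem isMeanFieldProfile (hu : IsMFSolution ρ u) (hρ : 0 < ρ) (hc : Continuous u) :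
    IsMeanFieldProfile (meanFieldFactor ρ u) (profile u) where
  pos := hu.meanFieldFactor_pos hρ
  continuous := hc.comp (by fun_prop)
  antitoneOn := hu.antitoneOn_profile hρ hc
  apply_one := (hu.2.2 _ (by simp)).1
  pohozaev := hu.pohozaev_profile (hu.isRadialOnBall hρ hc)
  apply_zero_le := hu.apply_zero_le hρ (hu.isRadialOnBall hρ hc)
  mul_radialMoment_le _ _ hδ hδr hr :=
    hu.mul_radialMoment_le hρ (hu.isRadialOnBall hρ hc) hδr hδ hr
  integral_le := hu.integral_profile_le hρ (hu.isRadialOnBall hρ hc)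

end IsMFSolution

end MeanFieldSolutions

theorem mean_field_quantization_general {ι : Type*} {L : Filter ι} {ρ : ι → ℝ}
    {u : ι → ℝ⁴ → ℝ} (hsol : ∀ k, IsMFSolution (ρ k) (u k))
    (hblow : Tendsto (fun k => sSup (u k '' 𝔻)) L atTop) :
    Tendsto ρ L (nhds (64 * Real.pi ^ 2)) := by
  set v : ι → ℝ⁴ → ℝ := fun k => (𝔻).indicator (u k)
  have hv (k : ι) : IsMFSolution (ρ k) (v k) := (hsol k).indicator
  have hc (k : ι) : Continuous (v k) := (hsol k).continuous_indicator
  have hsup (k : ι) : sSup (u k '' 𝔻) = sSup (v k '' 𝔻) :=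
    congrArg sSup (Set.image_congr fun x hx => (Set.indicator_of_mem hx (u k)).symm)
  have hρ : ∀ᶠ k in L, 0 < ρ k := by
    filter_upwards [hblow.eventually_gt_atTop 0] with k hk
    by_contra! hle
    exact hk.not_ge ((hsol k).sSup_image_nonpos hle)
  have hprofile : ∀ᶠ k in L, IsMeanFieldProfile (meanFieldFactor (ρ k) (v k)) (profile (v k)) :=
    hρ.mono fun k hk => (hv k).isMeanFieldProfile hk (hc k)
  have hheight : Tendsto (fun k => profile (v k) 0) L atTop :=
    hblow.congr' (hρ.mono fun k hk => (hsup k).trans ((hv k).sSup_image_eq hk (hc k)))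
  have h := (tendsto_radialMoment_three hprofile hheight).const_mul (2 * Real.pi ^ 2)
  rw [show 2 * Real.pi ^ 2 * 32 = 64 * Real.pi ^ 2 by ring] at h
  exact h.congr' (hρ.mono fun k hk => (hv k).radialMoment_eq ((hv k).isRadialOnBall hk (hc k)))

/-- Quantization of the mean field parameter: if solutions `u_k` with `0 < ρ_k ≤ Λ` blow
up, then along a subsequence `ρ_k → 64π² m` for some positive integer `m`. -/
theorem mean_field_quantization (Λ : ℝ) (hΛ : 0 < Λ)
    (ρ : ℕ → ℝ) (u : ℕ → EuclideanSpace ℝ (Fin 4) → ℝ)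
    (hρ : ∀ k, 0 < ρ k ∧ ρ k ≤ Λ)
    (hsol : ∀ k, IsMFSolution (ρ k) (u k))
    (hblow : Tendsto
      (fun k => sSup ((u k) '' closedBall (0 : EuclideanSpace ℝ (Fin 4)) 1))
      atTop atTop) :
    ∃ m : ℕ, 0 < m ∧ ∃ φ : ℕ → ℕ, StrictMono φ ∧
      Tendsto (fun j => ρ (φ j)) atTop (nhds (64 * Real.pi ^ 2 * m)) :=
  ⟨1, one_pos, id, strictMono_id, by simpa using mean_field_quantization_general hsol hblow⟩

end
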